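/- arXiv:1901.01716 — 4 statements merged into one kernel-verified Lean document; each statement's English description precedes it below -/
import Mathlib

section
/- Let K be a finite simplicial complex with a discrete Morse function f. Suppose α^{(n)} is a critical simplex with f(α) ∈ (a,b] and f^{-1}((a,b]) contains no other critical simplices. Let a' = min{ x ∈ [a, f(α)) : f^{-1}((x, f(α)]) = {α} }. Then K(a') = K(f(α)) \ {α}, and α is a maximal face of K(f(α)). -/
/-! The argument rests on one fact about discrete Morse functions: if every codimension-one coface
of `α` has a larger value than `α`, then so does every proper coface `β`
(`lt_of_ssubset_of_forall_codim_one`). When `β` has codimension at least two, two of the facets of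
`β` contain `α`; at most one of these has a value `≥ f β`, so the other is a proper coface of `α`
with a smaller value than `β`, and induction on `β` applies.

Hence no simplex of value `≤ f α` properly contains the critical simplex `α`, so `α` is maximal in
`K(f α)` and is absent from `K(a')`. By the choice of `a'`, any simplex other than `α` of value
`≤ f α` has value `≤ a'`. A proper face of `α` lies in a facet of `α`, which has a value `< f α` by
criticality, hence `≤ a'`; so `K(a')` retains everything in `K(f α)` other than `α`. -/


/-! # Prelude: weighted simplicial complexes and discrete Morse theory -/

/-- A finite abstract simplicial complex on a vertex type `V`:
a finite set of nonempty finite vertex sets, closed under nonempty subsets. -/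
structure FinSC (V : Type*) where
  faces : Finset (Finset V)
  not_empty_mem : ∅ ∉ faces
  down_closed : ∀ σ ∈ faces, ∀ τ ⊆ σ, τ.Nonempty → τ ∈ faces

namespace FinSC

variable {V : Type*} [LinearOrder V] {R : Type*} [CommRing R] [IsDomain R]

/-- `(K, w)` is a weighted simplicial complex: weights of faces divide weights of cofaces. -/
def IsWeight (K : FinSC V) (w : Finset V → R) : Prop :=
  ∀ σ ∈ K.faces, ∀ τ ∈ K.faces, σ ⊆ τ → w σ ∣ w τ

open scoped Classical in
/-- The quotient `a / b` in an integral domain, defined (via choice) when `b ∣ a`, else `0`. -/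
noncomputable def divR {R : Type*} [CommRing R] (a b : R) : R :=
  if h : b ∣ a then h.choose else 0

/-- `dFace σ i` deletes the `i`-th vertex (in the linear order) from the simplex `σ`. -/
def dFace (σ : Finset V) (i : ℕ) : Finset V :=
  match (σ.sort (· ≤ ·))[i]? with
  | some v => σ.erase v
  | none => σ

/-- The basis of the weighted chain group in degree `n`:
`n`-simplices (i.e. of cardinality `n+1`) of `K` with nonzero weight. -/
abbrev ChainIdx (K : FinSC V) (w : Finset V → R) (n : ℕ) :=
  {σ : Finset V // σ ∈ K.faces ∧ σ.card = n + 1 ∧ w σ ≠ 0}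

/-- The weighted chain group `C_n(K, w)`: the free `R`-module on the `n`-simplices
of `K` with nonzero weight. -/
abbrev WChain (K : FinSC V) (w : Finset V → R) (n : ℕ) :=
  ChainIdx K w n →₀ R

open scoped Classical in
/-- The weighted boundary `∂^w σ = Σ_i (-1)^i (w σ / w (d_i σ)) d_i σ` of a single
`(n+1)`-simplex `σ`, as an element of `C_n(K, w)`. -/
noncomputable def bdElem (K : FinSC V) (w : Finset V → R) (n : ℕ) (σ : Finset V) :
    WChain K w n :=
  ∑ i ∈ Finset.range (n + 2),
    if h : dFace σ i ∈ K.faces ∧ (dFace σ i).card = n + 1 ∧ w (dFace σ i) ≠ 0 then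
      Finsupp.single (⟨dFace σ i, h⟩ : ChainIdx K w n)
        ((-1 : R) ^ i * divR (w σ) (w (dFace σ i)))
    else 0

/-- The weighted boundary map `∂^w_{n+1} : C_{n+1}(K,w) → C_n(K,w)`. -/
noncomputable def wBoundary (K : FinSC V) (w : Finset V → R) (n : ℕ) :
    WChain K w (n + 1) →ₗ[R] WChain K w n :=
  Finsupp.linearCombination R (fun σ : ChainIdx K w (n + 1) => bdElem K w n σ.1)

/-- The submodule of weighted `n`-cycles (`ker ∂^w_n`; everything in degree `0`). -/
noncomputable def cycles (K : FinSC V) (w : Finset V → R) :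
    (n : ℕ) → Submodule R (WChain K w n)
  | 0 => ⊤
  | n + 1 => LinearMap.ker (wBoundary K w n)

/-- The submodule of weighted `n`-boundaries (`im ∂^w_{n+1}`). -/
noncomputable def bdries (K : FinSC V) (w : Finset V → R) (n : ℕ) :
    Submodule R (WChain K w n) :=
  LinearMap.range (wBoundary K w n)

/-- The `n`-th weighted homology `H_n(K,w) = ker ∂^w_n / im ∂^w_{n+1}`, realized as the
image of the cycles in `C_n(K,w) ⧸ im ∂^w_{n+1}` (since `im ∂^w_{n+1} ⊆ ker ∂^w_n`,
this is exactly `ker ∂^w_n / im ∂^w_{n+1}`). -/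
noncomputable def wHomologyS (K : FinSC V) (w : Finset V → R) (n : ℕ) :
    Submodule R (WChain K w n ⧸ bdries K w n) :=
  Submodule.map (bdries K w n).mkQ (cycles K w n)

/-- The `n`-th weighted homology as a type (an `R`-module). -/
abbrev wHomology (K : FinSC V) (w : Finset V → R) (n : ℕ) :=
  ↥(wHomologyS K w n)

/-- The homology class of a weighted cycle. -/
noncomputable def classOf (K : FinSC V) (w : Finset V → R) (n : ℕ)
    (z : WChain K w n) (hz : z ∈ cycles K w n) : wHomology K w n :=
  ⟨(bdries K w n).mkQ z, Submodule.mem_map_of_mem hz⟩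

/-- `σ` is a free face of `τ` in `K`: `σ` is a proper face of `τ` and of no other simplex. -/
def IsFreeFace (K : FinSC V) (σ τ : Finset V) : Prop :=
  σ ∈ K.faces ∧ τ ∈ K.faces ∧ σ ⊂ τ ∧ ∀ ρ ∈ K.faces, σ ⊂ ρ → ρ = τ

/-- An elementary collapse: removal of a free face pair. -/
def ElemCollapse (K L : FinSC V) : Prop :=
  ∃ σ τ : Finset V, IsFreeFace K σ τ ∧ L.faces = K.faces \ {σ, τ}

/-- `K ↘ L`: `K` collapses onto `L` by a finite sequence of elementary collapses. -/
def Collapses (K L : FinSC V) : Prop :=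
  Relation.ReflTransGen ElemCollapse K L

/-- `σ` is a maximal face of `K`: it is a proper face of no simplex of `K`. -/
def IsMaximalFace (K : FinSC V) (σ : Finset V) : Prop :=
  σ ∈ K.faces ∧ ∀ τ ∈ K.faces, ¬ σ ⊂ τ

/-- `f : K → ℝ` is a discrete Morse function: each simplex has at most one
codimension-one coface with no bigger `f`-value, and at most one codimension-one
face with no smaller `f`-value. -/
def IsDiscreteMorse (K : FinSC V) (f : Finset V → ℝ) : Prop :=
  ∀ α ∈ K.faces,
    {β : Finset V | β ∈ K.faces ∧ α ⊂ β ∧ β.card = α.card + 1 ∧ f β ≤ f α}.Subsingleton ∧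
    {γ : Finset V | γ ∈ K.faces ∧ γ ⊂ α ∧ γ.card + 1 = α.card ∧ f α ≤ f γ}.Subsingleton

/-- `α` is a critical simplex of the discrete Morse function `f`. -/
def IsCritical (K : FinSC V) (f : Finset V → ℝ) (α : Finset V) : Prop :=
  (∀ β ∈ K.faces, α ⊂ β → β.card = α.card + 1 → ¬ f β ≤ f α) ∧
  (∀ γ ∈ K.faces, γ ⊂ α → γ.card + 1 = α.card → ¬ f α ≤ f γ)

/-- `α` is `w`-simple: `w α ≠ 0`, and any codimension-one face `γ < α` with
`f γ ≥ f α` satisfies `w γ = w α`. -/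
def IsWSimple (K : FinSC V) (w : Finset V → R) (f : Finset V → ℝ) (α : Finset V) : Prop :=
  w α ≠ 0 ∧ ∀ γ ∈ K.faces, γ ⊂ α → γ.card + 1 = α.card → f α ≤ f γ → w γ = w α

/-- The level subcomplex `K(c)`: all simplices with `f`-value at most `c`,
together with all of their faces. -/
noncomputable def levelSub (K : FinSC V) (f : Finset V → ℝ) (c : ℝ) : FinSC V where
  faces := K.faces.filter (fun α => ∃ β ∈ K.faces, α ⊆ β ∧ f β ≤ c)
  not_empty_mem := by simp [Finset.mem_filter, K.not_empty_mem]
  down_closed := by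
    intro σ hσ τ hτsub hτne
    simp only [Finset.mem_filter] at hσ ⊢
    obtain ⟨hσK, β, hβ, hσβ, hfβ⟩ := hσ
    exact ⟨K.down_closed σ hσK τ hτsub hτne, β, hβ, hτsub.trans hσβ, hfβ⟩

/-- The chains of `C_n(K,w)` supported on simplices of a subcomplex `L`. -/
noncomputable def chainsIn (K L : FinSC V) (w : Finset V → R) (n : ℕ) :
    Submodule R (WChain K w n) where
  carrier := {x | ∀ σ : ChainIdx K w n, x σ ≠ 0 → σ.1 ∈ L.faces}
  add_mem' := by
    intro a b ha hb σ h
    by_cases h1 : a σ = 0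
    · exact hb σ (by simpa [h1] using h)
    · exact ha σ h1
  zero_mem' := by intro σ h; simp at h
  smul_mem' := by
    intro r x hx σ h
    refine hx σ fun h0 => ?_
    simp [Finsupp.smul_apply, h0] at h

/-- The image of the map `i_* : H_n(L,w) → H_n(K,w)` induced by the inclusion of
chain complexes: the classes in `H_n(K,w)` of cycles of `K` supported on simplices
of the subcomplex `L`. -/
noncomputable def imInduced (K L : FinSC V) (w : Finset V → R) (n : ℕ) :
    Submodule R (wHomology K w n) :=
  Submodule.comap (wHomologyS K w n).subtype
    (Submodule.map (bdries K w n).mkQ (cycles K w n ⊓ chainsIn K L w n))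

end FinSC

section OrderComplex

variable {A : Type*} [LinearOrder A]

/-- The proper (nonempty, not all of `S`) substrings of a sequence `S`,
i.e. its proper nonempty infixes. -/
def properSubstr (S : List A) : Finset (List A) :=
  ((S.tails.flatMap List.inits).toFinset).filter (fun T => T ≠ [] ∧ T ≠ S)

/-- The order complex `Δ(P_S)` of the poset of proper substrings of `S` under the
substring (infix) partial order: faces are the nonempty chains. -/
def orderComplex (S : List A) : FinSC (List A) where
  faces := (properSubstr S).powerset.filter
    (fun σ => σ.Nonempty ∧ ∀ T₁ ∈ σ, ∀ T₂ ∈ σ, T₁ <:+: T₂ ∨ T₂ <:+: T₁)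
  not_empty_mem := by simp
  down_closed := by
    intro σ hσ τ hτsub hτne
    simp only [Finset.mem_filter, Finset.mem_powerset] at hσ ⊢
    exact ⟨hτsub.trans hσ.1, hτne,
      fun T₁ h1 T₂ h2 => hσ.2.2 T₁ (hτsub h1) T₂ (hτsub h2)⟩

end OrderComplex

namespace FinSC

variable {V : Type*} [LinearOrder V] {R : Type*} [CommRing R] [IsDomain R]

/-- A simplex lying below all its codimension-one cofaces lies below all its proper cofaces. -/
theorem lt_of_ssubset_of_forall_codim_one {K : FinSC V} {f : Finset V → ℝ}
    (hf : IsDiscreteMorse K f) {α : Finset V} (hα : α ∈ K.faces)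
    (hup : ∀ β ∈ K.faces, α ⊂ β → β.card = α.card + 1 → f α < f β)
    (β : Finset V) (hβ : β ∈ K.faces) (hαβ : α ⊂ β) : f α < f β := by
  induction β using Finset.strongInduction with
  | H β ih =>
    have hlt := Finset.card_lt_card hαβ
    by_cases hc : β.card = α.card + 1
    · exact hup β hβ hαβ hc
    have hne : α.Nonempty :=
      Finset.nonempty_iff_ne_empty.2 fun h => K.not_empty_mem (h ▸ hα)
    -- Two distinct vertices of `β` outside `α` give two facets of `β` containing `α`.
    have hdiff : 1 < (β \ α).card := by
      rw [Finset.card_sdiff_of_subset hαβ.subset]; omega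
    obtain ⟨x, hx, y, hy, hxy⟩ := Finset.one_lt_card.1 hdiff
    rw [Finset.mem_sdiff] at hx hy
    have facet : ∀ z, z ∈ β ∧ z ∉ α → β.erase z ∈ K.faces ∧ β.erase z ⊂ β ∧
        (β.erase z).card + 1 = β.card ∧ f α < f (β.erase z) := by
      intro z hz
      have hsub : α ⊆ β.erase z := Finset.subset_erase.2 ⟨hαβ.subset, hz.2⟩
      have hcard := Finset.card_erase_add_one hz.1
      have hmem := K.down_closed β hβ _ (Finset.erase_subset z β) (hne.mono hsub)
      refine ⟨hmem, Finset.erase_ssubset hz.1, hcard, ?_⟩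
      refine ih _ (Finset.erase_ssubset hz.1) hmem (hsub.ssubset_of_ne fun h => ?_)
      rw [← h] at hcard
      exact hc hcard.symm
    obtain ⟨hx1, hx2, hx3, hx4⟩ := facet x hx
    obtain ⟨hy1, hy2, hy3, hy4⟩ := facet y hy
    by_contra hle
    have hle := not_lt.1 hle
    -- Both facets would have value `> f α ≥ f β`, against the Morse condition at `β`.
    have heq : β.erase x = β.erase y :=
      (hf β hβ).2 ⟨hx1, hx2, hx3, (hle.trans_lt hx4).le⟩ ⟨hy1, hy2, hy3, (hle.trans_lt hy4).le⟩
    exact Finset.notMem_erase x β (heq ▸ Finset.mem_erase.2 ⟨hxy, hx.1⟩)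

/-- first part of Theorem `thm:mainremoval`.  Let `K` be a finite
simplicial complex with a discrete Morse function `f`.  Suppose `α^{(n)}` is a critical
simplex with `f α ∈ (a,b]` and `f⁻¹((a,b])` contains no other critical simplices.  Let
`a' = min { x ∈ [a, f α) : f⁻¹((x, f α]) = {α} }`.  Then
`K(a') = K(f α) \ {α}`, and `α` is a maximal face of `K(f α)`. -/
theorem levelSub_critical_removal
    (K : FinSC V) (f : Finset V → ℝ) (hf : IsDiscreteMorse K f)
    (a b : ℝ) (n : ℕ) (α : Finset V) (hα : α ∈ K.faces) (hαc : α.card = n + 1)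
    (hcrit : IsCritical K f α) (hfα : f α ∈ Set.Ioc a b)
    (honly : ∀ σ ∈ K.faces, f σ ∈ Set.Ioc a b → IsCritical K f σ → σ = α)
    (a' : ℝ)
    (ha' : IsLeast {x : ℝ | x ∈ Set.Ico a (f α) ∧
      ∀ σ ∈ K.faces, f σ ∈ Set.Ioc x (f α) → σ = α} a') :
    (levelSub K f a').faces = (levelSub K f (f α)).faces.erase α ∧
    IsMaximalFace (levelSub K f (f α)) α := by
  obtain ⟨⟨⟨-, ha'lt⟩, honly'⟩, -⟩ := ha'
  have hup : ∀ β ∈ K.faces, α ⊂ β → f α < f β :=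
    lt_of_ssubset_of_forall_codim_one hf hα fun β hβ hαβ hc => not_le.1 (hcrit.1 β hβ hαβ hc)
  have hgap : ∀ β ∈ K.faces, β ≠ α → f β ≤ f α → f β ≤ a' := fun β hβ hne hle =>
    le_of_not_gt fun hlt => hne (honly' β hβ ⟨hlt, hle⟩)
  have mem_iff : ∀ (c : ℝ) (σ : Finset V), σ ∈ (levelSub K f c).faces ↔
      σ ∈ K.faces ∧ ∃ β ∈ K.faces, σ ⊆ β ∧ f β ≤ c := fun c σ => Finset.mem_filter
  refine ⟨?_, (mem_iff _ _).2 ⟨hα, α, hα, subset_rfl, le_rfl⟩, fun τ hτ hατ => ?_⟩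
  · ext σ
    rw [Finset.mem_erase, mem_iff, mem_iff]
    constructor
    · rintro ⟨hσ, β, hβ, hσβ, hle⟩
      refine ⟨?_, hσ, β, hβ, hσβ, hle.trans ha'lt.le⟩
      rintro rfl
      rcases hσβ.eq_or_ssubset with h | h
      · rw [← h] at hle
        exact hle.not_gt ha'lt
      · exact (hup β hβ h).not_ge (hle.trans ha'lt.le)
    · rintro ⟨hne, hσ, β, hβ, hσβ, hle⟩
      refine ⟨hσ, ?_⟩
      by_cases hβα : β = α
      · subst hβα
        -- A proper face of `α` lies in the facet omitting a vertex `z` outside it.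
        obtain ⟨z, hz, hzσ⟩ := Finset.exists_of_ssubset (hσβ.ssubset_of_ne hne)
        have hsub : σ ⊆ β.erase z := Finset.subset_erase.2 ⟨hσβ, hzσ⟩
        have hσne : σ.Nonempty :=
          Finset.nonempty_iff_ne_empty.2 fun h => K.not_empty_mem (h ▸ hσ)
        have hss := Finset.erase_ssubset hz
        have hmem := K.down_closed β hβ _ hss.subset (hσne.mono hsub)
        have hlt := not_le.1 (hcrit.2 _ hmem hss (Finset.card_erase_add_one hz))
        exact ⟨_, hmem, hsub, hgap _ hmem hss.ne hlt.le⟩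
      · exact ⟨β, hβ, hσβ, hgap β hβ hβα hle⟩
  · obtain ⟨-, β, hβ, hτβ, hle⟩ := (mem_iff _ _).1 hτ
    exact (hup β hβ (hατ.trans_subset hτβ)).not_ge hle

end FinSC
end

section
/- Let (K,w) be a weighted simplicial complex over an integral domain R with a discrete Morse function f. Suppose α^{(n)} is a critical simplex with f(α) ∈ (a,b] and f^{-1}((a,b]) contains no other critical simplices, and let a' = min{ x ∈ [a, f(α)) : f^{-1}((x, f(α)]) = {α} }. If every simplex in f^{-1}((a,a']) ∪ f^{-1}((f(α),b]) is w-simple, then K(b) ↘ K(f(α)) and K(a') ↘ K(a) are collapses that preserve weighted homology. -/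
namespace FinSC

variable {V : Type*} [LinearOrder V] {R : Type*} [CommRing R] [IsDomain R]

set_option linter.unusedSectionVars false

/-! ### The boundary operator on finitely supported functions of finite sets -/

/-- The number of vertices of `σ` smaller than `v`: the index `i` with `d_i σ = σ \ {v}`. -/
def pos (σ : Finset V) (v : V) : ℕ := (σ.filter (· < v)).card

lemma pos_orderEmbOfFin (σ : Finset V) {k : ℕ} (h : σ.card = k) (i : Fin k) :
    pos σ (σ.orderEmbOfFin h i) = i := by
  have : σ.filter (· < σ.orderEmbOfFin h i) =
      (Finset.Iio i).map (σ.orderEmbOfFin h).toEmbedding := by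
    ext u
    simp only [Finset.mem_filter, Finset.mem_map, Finset.mem_Iio]
    constructor
    · rintro ⟨hu, hlt⟩
      have : u ∈ Set.range (σ.orderEmbOfFin h) := by simpa using hu
      obtain ⟨j, rfl⟩ := this
      exact ⟨j, by simpa using hlt, rfl⟩
    · rintro ⟨j, hj, rfl⟩
      exact ⟨by simp, by simpa using hj⟩
  simp [pos, this]

lemma dFace_orderEmbOfFin (σ : Finset V) {k : ℕ} (h : σ.card = k) (i : Fin k) :
    dFace σ i = σ.erase (σ.orderEmbOfFin h i) := by
  have hi : (i : ℕ) < (σ.sort (· ≤ ·)).length := by simp [h]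
  simp [dFace, List.getElem?_eq_getElem hi, Finset.orderEmbOfFin_apply]

lemma sum_dFace {A : Type*} [AddCommMonoid A] (σ : Finset V) {k : ℕ} (h : σ.card = k)
    (g : Finset V → ℕ → A) :
    ∑ i ∈ Finset.range k, g (dFace σ i) i = ∑ v ∈ σ, g (σ.erase v) (pos σ v) := by
  rw [← Fin.sum_univ_eq_sum_range (fun i => g (dFace σ i) i)]
  have hσ : σ = Finset.univ.map (σ.orderEmbOfFin h).toEmbedding := by
    ext u
    have : u ∈ Set.range (σ.orderEmbOfFin h) ↔ u ∈ σ := by simp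
    rw [← this]
    simp only [Finset.mem_map, Finset.mem_univ, true_and, Set.mem_range]
    rfl
  rw [show (∑ v ∈ σ, g (σ.erase v) (pos σ v)) =
    ∑ v ∈ Finset.univ.map (σ.orderEmbOfFin h).toEmbedding, g (σ.erase v) (pos σ v) by
      rw [← hσ], Finset.sum_map]
  refine Finset.sum_congr rfl fun i _ => ?_
  simp [pos_orderEmbOfFin, dFace_orderEmbOfFin σ h]

/-- Removing two vertices in either order gives opposite signs. -/
lemma sign_swap (σ : Finset V) {u v : V} (hu : u ∈ σ) (hv : v ∈ σ) (huv : u ≠ v) :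
    ((-1 : R) ^ pos σ v * (-1) ^ pos (σ.erase v) u) =
      - ((-1) ^ pos σ u * (-1) ^ pos (σ.erase u) v) := by
  have key : ∀ a b : V, a ∈ σ → b ∈ σ → a < b →
      pos (σ.erase b) a = pos σ a ∧ pos (σ.erase a) b + 1 = pos σ b := by
    intro a b ha hb hab
    constructor
    · unfold pos
      congr 1
      ext c
      simp only [Finset.mem_filter, Finset.mem_erase]
      constructor
      · tauto
      · rintro ⟨h1, h2⟩
        exact ⟨⟨(h2.trans hab).ne, h1⟩, h2⟩
    · unfold pos
      rw [Finset.filter_erase, Finset.card_erase_add_one]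
      simp [ha, hab]
  rcases lt_or_gt_of_ne huv with h | h
  · obtain ⟨h1, h2⟩ := key u v hu hv h
    rw [h1, ← h2]; ring
  · obtain ⟨h1, h2⟩ := key v u hv hu h
    rw [h1, ← h2]; ring

lemma divR_mul {a b : R} (h : b ∣ a) : b * divR a b = a := by
  unfold divR
  rw [dif_pos h]
  exact h.choose_spec.symm

lemma divR_self {a : R} (h : a ≠ 0) : divR a a = 1 :=
  mul_left_cancel₀ h (by rw [divR_mul dvd_rfl, mul_one])

/-- The weighted boundary of `σ`, written as a sum over the vertices of `σ` and valued in
functions on all finite vertex sets, so that no membership proofs are carried along. -/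
noncomputable def bdFun (w : Finset V → R) (σ : Finset V) : Finset V →₀ R :=
  ∑ v ∈ σ, Finsupp.single (σ.erase v) ((-1 : R) ^ pos σ v * divR (w σ) (w (σ.erase v)))

/-- The linear extension of `bdFun`. -/
noncomputable def bdLin (w : Finset V → R) : (Finset V →₀ R) →ₗ[R] (Finset V →₀ R) :=
  Finsupp.linearCombination R (bdFun w)

/-- The inclusion of the weighted chains of degree `n` into all functions on finite sets. -/
noncomputable def toAll (K : FinSC V) (w : Finset V → R) (n : ℕ) :
    WChain K w n →ₗ[R] (Finset V →₀ R) :=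
  Finsupp.lmapDomain R R Subtype.val

lemma toAll_injective (K : FinSC V) (w : Finset V → R) (n : ℕ) :
    Function.Injective (toAll K w n) :=
  Finsupp.mapDomain_injective Subtype.val_injective

lemma toAll_single (K : FinSC V) (w : Finset V → R) (n : ℕ) (s : ChainIdx K w n) (r : R) :
    toAll K w n (Finsupp.single s r) = Finsupp.single s.1 r := by
  simp [toAll]

lemma toAll_support {K : FinSC V} {w : Finset V → R} {n : ℕ} (x : WChain K w n) {ρ : Finset V}
    (h : toAll K w n x ρ ≠ 0) : ρ ∈ K.faces ∧ ρ.card = n + 1 ∧ w ρ ≠ 0 := by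
  by_contra hc
  refine h (Finsupp.mapDomain_of_notMem_range _ _ ?_)
  rintro ⟨s, rfl⟩
  exact hc s.2

lemma exists_toAll_eq {K : FinSC V} {w : Finset V → R} {n : ℕ} (z : Finset V →₀ R)
    (h : ∀ ρ, z ρ ≠ 0 → ρ ∈ K.faces ∧ ρ.card = n + 1 ∧ w ρ ≠ 0) :
    ∃ y : WChain K w n, toAll K w n y = z := by
  refine ⟨z.comapDomain Subtype.val Subtype.val_injective.injOn, ?_⟩
  refine Finsupp.mapDomain_comapDomain _ Subtype.val_injective _ ?_
  intro ρ hρ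
  exact ⟨⟨ρ, h ρ (by simpa using hρ)⟩, rfl⟩

lemma IsWeight.ne_zero {K : FinSC V} {w : Finset V → R} (hw : IsWeight K w) {σ τ : Finset V}
    (hσ : σ ∈ K.faces) (hτ : τ ∈ K.faces) (h : σ ⊆ τ) (h0 : w τ ≠ 0) : w σ ≠ 0 := by
  intro h1
  exact h0 (zero_dvd_iff.1 (h1 ▸ hw σ hσ τ hτ h))

lemma erase_mem {K : FinSC V} {σ : Finset V} (hσ : σ ∈ K.faces)
    (h : 2 ≤ σ.card) (v : V) : σ.erase v ∈ K.faces := by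
  refine K.down_closed σ hσ _ (Finset.erase_subset _ _) ?_
  rw [← Finset.card_pos]
  have := Finset.pred_card_le_card_erase (s := σ) (a := v)
  omega

lemma toAll_bdElem {K : FinSC V} {w : Finset V → R} (hw : IsWeight K w) (n : ℕ)
    (s : ChainIdx K w (n + 1)) : toAll K w n (bdElem K w n s.1) = bdFun w s.1 := by
  classical
  obtain ⟨σ, hσ, hc, h0⟩ := s
  let g : Finset V → ℕ → (Finset V →₀ R) := fun ρ i =>
    if ρ ∈ K.faces ∧ ρ.card = n + 1 ∧ w ρ ≠ 0 then
      Finsupp.single ρ ((-1 : R) ^ i * divR (w σ) (w ρ)) else 0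
  have h1 : toAll K w n (bdElem K w n σ) = ∑ i ∈ Finset.range (n + 2), g (dFace σ i) i := by
    rw [bdElem, map_sum]
    refine Finset.sum_congr rfl fun i _ => ?_
    simp only [g]
    split_ifs with h
    · rw [toAll_single]
    · rw [map_zero]
  rw [h1]
  refine (sum_dFace σ hc g).trans ?_
  refine Finset.sum_congr rfl fun v hv => ?_
  have hm := erase_mem hσ (by omega) v
  have hcv : (σ.erase v).card + 1 = σ.card := Finset.card_erase_add_one hv
  simp only [g]
  rw [if_pos ⟨hm, by omega,
    hw.ne_zero hm hσ (Finset.erase_subset _ _) h0⟩]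

lemma toAll_wBoundary {K : FinSC V} {w : Finset V → R} (hw : IsWeight K w) (n : ℕ)
    (x : WChain K w (n + 1)) :
    toAll K w n (wBoundary K w n x) = bdLin w (toAll K w (n + 1) x) := by
  induction x using Finsupp.induction_linear with
  | zero => simp
  | add x y hx hy => simp [hx, hy]
  | single s r =>
    rw [toAll_single]
    simp [wBoundary, bdLin, toAll_bdElem hw]

/-- `∂ ∂ σ = 0`: the terms removing `v, u` and `u, v` cancel, since both have the weight quotient
`w σ / w (σ \ {u, v})` and opposite signs. -/
lemma bdLin_bdFun {K : FinSC V} {w : Finset V → R} (hw : IsWeight K w) {σ : Finset V}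
    (hσ : σ ∈ K.faces) (h0 : w σ ≠ 0) (hc : 3 ≤ σ.card) : bdLin w (bdFun w σ) = 0 := by
  have h1 : bdLin w (bdFun w σ) = ∑ v ∈ σ, ∑ u ∈ σ.erase v,
      Finsupp.single ((σ.erase v).erase u)
        (((-1 : R) ^ pos σ v * (-1) ^ pos (σ.erase v) u) *
          (divR (w σ) (w (σ.erase v)) * divR (w (σ.erase v)) (w ((σ.erase v).erase u)))) := by
    rw [bdFun, map_sum]
    refine Finset.sum_congr rfl fun v _ => ?_
    rw [bdLin, Finsupp.linearCombination_single, bdFun, Finset.smul_sum]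
    refine Finset.sum_congr rfl fun u _ => ?_
    rw [Finsupp.smul_single, smul_eq_mul]
    congr 1
    ring
  have hq : ∀ v ∈ σ, ∀ u ∈ σ.erase v, w ((σ.erase v).erase u) *
      (divR (w σ) (w (σ.erase v)) * divR (w (σ.erase v)) (w ((σ.erase v).erase u))) = w σ := by
    intro v hv u hu
    have hm := erase_mem hσ (by omega) v
    have hm' := erase_mem hm (by rw [Finset.card_erase_of_mem hv]; omega) u
    rw [mul_comm (divR (w σ) _), ← mul_assoc,
      divR_mul (hw _ hm' _ hm (Finset.erase_subset _ _)),
      divR_mul (hw _ hm _ hσ (Finset.erase_subset _ _))]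
  rw [h1, Finset.sum_sigma']
  refine Finset.sum_involution (fun p _ => ⟨p.2, p.1⟩) ?_ ?_ ?_ ?_
  · rintro ⟨v, u⟩ hp
    simp only [Finset.mem_sigma, Finset.mem_erase] at hp
    obtain ⟨hv, huv, hu⟩ := hp
    have hvu' : v ∈ σ.erase u := Finset.mem_erase.2 ⟨huv.symm, hv⟩
    have huv' : u ∈ σ.erase v := Finset.mem_erase.2 ⟨huv, hu⟩
    have e : (σ.erase u).erase v = (σ.erase v).erase u := Finset.erase_right_comm
    have hm' := erase_mem (erase_mem hσ (by omega) v)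
      (by rw [Finset.card_erase_of_mem hv]; omega) u
    have hne := hw.ne_zero hm' hσ
      ((Finset.erase_subset _ _).trans (Finset.erase_subset _ _)) h0
    have hqq := mul_left_cancel₀ hne ((hq v hv u huv').trans (e ▸ hq u hu v hvu').symm)
    dsimp only
    rw [e, ← Finsupp.single_add, sign_swap σ hu hv huv, hqq]
    simp
  · rintro ⟨v, u⟩ hp _ heq
    simp only [Finset.mem_sigma, Finset.mem_erase] at hp
    simp only [Sigma.mk.injEq] at heq
    exact hp.2.1 heq.1
  · rintro ⟨v, u⟩ hp
    simp only [Finset.mem_sigma, Finset.mem_erase] at hp ⊢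
    exact ⟨hp.2.2, hp.2.1.symm, hp.1⟩
  · intro p _
    rfl

lemma bdLin_bdLin {K : FinSC V} {w : Finset V → R} (hw : IsWeight K w) (n : ℕ)
    (x : WChain K w (n + 2)) : bdLin w (bdLin w (toAll K w (n + 2) x)) = 0 := by
  induction x using Finsupp.induction_linear with
  | zero => simp
  | add x y hx hy => simp [hx, hy]
  | single s r =>
    rw [toAll_single]
    have := bdLin_bdFun hw s.2.1 s.2.2.2 (by have := s.2.2.1; omega)
    rw [bdLin, Finsupp.linearCombination_single, ← bdLin, map_smul, this, smul_zero]

lemma wBoundary_wBoundary {K : FinSC V} {w : Finset V → R} (hw : IsWeight K w) (n : ℕ)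
    (x : WChain K w (n + 2)) : wBoundary K w n (wBoundary K w (n + 1) x) = 0 := by
  apply toAll_injective
  rw [toAll_wBoundary hw, toAll_wBoundary hw, bdLin_bdLin hw, map_zero]

lemma wBoundary_mem_cycles {K : FinSC V} {w : Finset V → R} (hw : IsWeight K w) (n : ℕ)
    (x : WChain K w (n + 1)) : wBoundary K w n x ∈ cycles K w n := by
  cases n with
  | zero => exact Submodule.mem_top
  | succ n => exact wBoundary_wBoundary hw n x

/-! ### Elementary collapses and weighted homology -/

/-- If `σ` is a free facet of `τ` with the same nonzero weight, then the coefficient of `σ` in a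
boundary is, up to sign, the coefficient of `τ` in the chain. -/
lemma exists_unit_bdLin {M : FinSC V} {w : Finset V → R} {σ τ : Finset V}
    (hfree : IsFreeFace M σ τ) (hc : τ.card = σ.card + 1) (hwe : w σ = w τ) (h0 : w τ ≠ 0) :
    ∃ u : R, u * u = 1 ∧ ∀ (n : ℕ) (x : WChain M w n),
      bdLin w (toAll M w n x) σ = toAll M w n x τ * u := by
  obtain ⟨hσ, hτ, hst, huniq⟩ := hfree
  obtain ⟨a, ha, rfl⟩ : ∃ a, a ∉ σ ∧ insert a σ = τ :=
    (Finset.covBy_iff_exists_insert.1 (Finset.covBy_iff_card_sdiff_eq_one.2 ⟨hst.1, by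
      rw [Finset.card_sdiff_of_subset hst.1]; omega⟩))
  have hτσ : bdFun w (insert a σ) σ = (-1) ^ pos (insert a σ) a := by
    rw [bdFun, Finsupp.finsetSum_apply, Finset.sum_eq_single_of_mem a (by simp)]
    · simp [ha, hwe, divR_self h0]
    · intro v hv hva
      rw [Finsupp.single_apply, if_neg]
      intro h
      exact ha (h ▸ Finset.mem_erase.2 ⟨hva.symm, by simp⟩)
  have hρσ : ∀ ρ ∈ M.faces, ρ ≠ insert a σ → bdFun w ρ σ = 0 := by
    intro ρ hρ hne
    rw [bdFun, Finsupp.finsetSum_apply]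
    refine Finset.sum_eq_zero fun v hv => ?_
    rw [Finsupp.single_apply, if_neg]
    intro h
    exact hne (huniq ρ hρ (h ▸ Finset.erase_ssubset hv))
  refine ⟨(-1) ^ pos (insert a σ) a, by rw [← mul_pow]; simp, fun n x => ?_⟩
  induction x using Finsupp.induction_linear with
  | zero => simp
  | add x y hx hy => simp [hx, hy, add_mul]
  | single s r =>
    rw [toAll_single, bdLin, Finsupp.linearCombination_single, Finsupp.smul_apply, smul_eq_mul]
    by_cases hs : s.1 = insert a σ
    · rw [hs, hτσ]; simp
    · rw [hρσ _ s.2.1 hs]; simp [hs]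

/-- Removing a free facet `σ` of `τ` together with `τ` preserves weighted homology when `σ` and `τ`
have the same nonzero weight: modulo boundaries the `σ`-coefficient of a chain can be made zero,
and a chain whose boundary avoids `σ` avoids `τ`. -/
lemma nonempty_wHomology_equiv {M L : FinSC V} {w : Finset V → R} (hw : IsWeight M w)
    {σ τ : Finset V} (hfree : IsFreeFace M σ τ) (hc : τ.card = σ.card + 1)
    (hwe : w σ = w τ) (h0 : w τ ≠ 0) (hL : L.faces = M.faces \ {σ, τ}) (n : ℕ) :
    Nonempty (wHomology M w n ≃ₗ[R] wHomology L w n) := by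
  have hLM : ∀ ρ ∈ L.faces, ρ ∈ M.faces := fun ρ h => by
    rw [hL] at h; exact (Finset.mem_sdiff.1 h).1
  have hwL : IsWeight L w := fun ρ h ρ' h' => hw ρ (hLM ρ h) ρ' (hLM ρ' h')
  have hσ1 : 1 ≤ σ.card := by
    rw [Nat.one_le_iff_ne_zero, Ne, Finset.card_eq_zero]
    rintro rfl
    exact M.not_empty_mem hfree.1
  obtain ⟨u, huu, hu⟩ := exists_unit_bdLin hfree hc hwe h0
  let ι : ∀ k, WChain L w k →ₗ[R] WChain M w k := fun k =>
    Finsupp.lmapDomain R R (fun s => ⟨s.1, hLM _ s.2.1, s.2.2⟩)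
  have hι : ∀ k x, toAll M w k (ι k x) = toAll L w k x := by
    intro k x
    simp only [ι, toAll, Finsupp.lmapDomain_apply, ← Finsupp.mapDomain_comp]
    rfl
  have hinj : ∀ k, Function.Injective (ι k) := by
    intro k x y hxy
    apply toAll_injective
    rw [← hι, hxy, hι]
  have hbd : ∀ k x, wBoundary M w k (ι (k + 1) x) = ι k (wBoundary L w k x) := by
    intro k x
    apply toAll_injective
    rw [toAll_wBoundary hw, hι, hι, toAll_wBoundary hwL]
  have hcyc : ∀ k x, ι k x ∈ cycles M w k ↔ x ∈ cycles L w k := by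
    intro k x
    cases k with
    | zero => exact ⟨fun _ => Submodule.mem_top, fun _ => Submodule.mem_top⟩
    | succ k =>
      simp only [cycles, LinearMap.mem_ker, hbd]
      exact map_eq_zero_iff _ (hinj k)
  -- A chain of `M` without `σ`- and `τ`-coefficient comes from `L`.
  have hran : ∀ k (x : WChain M w k), toAll M w k x σ = 0 → toAll M w k x τ = 0 →
      ∃ y, ι k y = x := by
    intro k x h1 h2
    obtain ⟨y, hy⟩ := exists_toAll_eq (K := L) (w := w) (n := k) (toAll M w k x) (by
      intro ρ hρ
      obtain ⟨h3, h4⟩ := toAll_support x hρ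
      refine ⟨?_, h4⟩
      rw [hL, Finset.mem_sdiff, Finset.mem_insert, Finset.mem_singleton]
      refine ⟨h3, ?_⟩
      rintro (rfl | rfl)
      · exact hρ h1
      · exact hρ h2)
    exact ⟨y, toAll_injective _ _ _ (by rw [hι, hy])⟩
  -- The `σ`-coefficient of a chain can be killed by a multiple of the boundary of `τ`.
  have hkill : ∀ k (x : WChain M w k), ∃ e : WChain M w (k + 1),
      toAll M w k (x - wBoundary M w k e) σ = 0 := by
    intro k x
    by_cases hk : σ.card = k + 1
    · refine ⟨Finsupp.single ⟨τ, hfree.2.1, by omega, h0⟩ (toAll M w k x σ * u), ?_⟩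
      rw [map_sub, toAll_wBoundary hw, Finsupp.sub_apply, hu, toAll_single]
      simp [mul_assoc, huu]
    · refine ⟨0, ?_⟩
      by_contra h
      exact hk (toAll_support _ h).2.1
  have htau : ∀ k (x : WChain M w (k + 1)), toAll M w k (wBoundary M w k x) σ = 0 →
      toAll M w (k + 1) x τ = 0 := by
    intro k x h
    rw [toAll_wBoundary hw, hu] at h
    calc toAll M w (k + 1) x τ = toAll M w (k + 1) x τ * u * u := by rw [mul_assoc, huu, mul_one]
      _ = 0 := by rw [h, zero_mul]
  have hsurj : ∀ z ∈ cycles M w n, ∃ y ∈ cycles L w n, z - ι n y ∈ bdries M w n := by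
    intro z hz
    obtain ⟨e, he⟩ := hkill n z
    have hz' : z - wBoundary M w n e ∈ cycles M w n :=
      Submodule.sub_mem _ hz (wBoundary_mem_cycles hw n e)
    obtain ⟨y, hy⟩ := hran n _ he (by
      cases n with
      | zero =>
        by_contra h
        have := (toAll_support _ h).2.1
        omega
      | succ n =>
        apply htau
        rw [show wBoundary M w n (z - wBoundary M w (n + 1) e) = 0 from hz']
        simp)
    refine ⟨y, (hcyc n y).1 (hy ▸ hz'), e, ?_⟩
    rw [hy]; abel
  have hin : ∀ y, ι n y ∈ bdries M w n → y ∈ bdries L w n := by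
    rintro y ⟨x, hx⟩
    obtain ⟨e, he⟩ := hkill (n + 1) x
    have hb : wBoundary M w n (x - wBoundary M w (n + 1) e) = ι n y := by
      rw [map_sub, hx, wBoundary_wBoundary hw, sub_zero]
    obtain ⟨x', hx'⟩ := hran (n + 1) _ he (by
      apply htau
      rw [hb, hι]
      by_contra h
      have := (toAll_support _ h).1
      simp [hL] at this)
    refine ⟨x', hinj n ?_⟩
    rw [← hbd, hx', hb]
  have hle : bdries L w n ≤ (bdries M w n).comap (ι n) := by
    rintro _ ⟨x, rfl⟩
    exact ⟨ι (n + 1) x, hbd n x⟩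
  let Φ := Submodule.mapQ (bdries L w n) (bdries M w n) (ι n) hle
  have hΦ : ∀ q ∈ wHomologyS L w n, Φ q ∈ wHomologyS M w n := by
    rintro _ ⟨y, hy, rfl⟩
    exact ⟨ι n y, (hcyc n y).2 hy, rfl⟩
  refine ⟨(LinearEquiv.ofBijective (Φ.restrict hΦ) ⟨?_, ?_⟩).symm⟩
  · rw [injective_iff_map_eq_zero]
    rintro ⟨_, y, hy, rfl⟩ h
    have h' : (bdries M w n).mkQ (ι n y) = 0 := congrArg Subtype.val h
    rw [Submodule.mkQ_apply, Submodule.Quotient.mk_eq_zero] at h'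
    apply Subtype.ext
    change (bdries L w n).mkQ y = 0
    rw [Submodule.mkQ_apply, Submodule.Quotient.mk_eq_zero]
    exact hin y h'
  · rintro ⟨_, z, hz, rfl⟩
    obtain ⟨y, hy, hzy⟩ := hsurj z hz
    refine ⟨⟨(bdries L w n).mkQ y, y, hy, rfl⟩, Subtype.ext ?_⟩
    change (bdries M w n).mkQ (ι n y) = (bdries M w n).mkQ z
    symm
    rw [← sub_eq_zero, ← map_sub, Submodule.mkQ_apply, Submodule.Quotient.mk_eq_zero]
    exact hzy

/-! ### Discrete Morse functions -/

/-- `(σ, τ)` is a pair of the gradient field of `f`: `σ` is a facet of `τ` on which `f` does not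
drop below its value on `τ`. -/
def GradPair (K : FinSC V) (f : Finset V → ℝ) (σ τ : Finset V) : Prop :=
  σ ∈ K.faces ∧ τ ∈ K.faces ∧ σ ⊂ τ ∧ τ.card = σ.card + 1 ∧ f τ ≤ f σ

section Morse

variable {K : FinSC V} {f : Finset V → ℝ}

lemma GradPair.top_unique (hf : IsDiscreteMorse K f) {σ τ τ' : Finset V}
    (h : GradPair K f σ τ) (h' : GradPair K f σ τ') : τ = τ' :=
  (hf σ h.1).1 ⟨h.2.1, h.2.2.1, h.2.2.2.1, h.2.2.2.2⟩ ⟨h'.2.1, h'.2.2.1, h'.2.2.2.1, h'.2.2.2.2⟩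

lemma GradPair.bot_unique (hf : IsDiscreteMorse K f) {σ σ' τ : Finset V}
    (h : GradPair K f σ τ) (h' : GradPair K f σ' τ) : σ = σ' :=
  (hf τ h.2.1).2 ⟨h.1, h.2.2.1, h.2.2.2.1.symm, h.2.2.2.2⟩
    ⟨h'.1, h'.2.2.1, h'.2.2.2.1.symm, h'.2.2.2.2⟩

/-- Between simplices of codimension two there is a second intermediate simplex. -/
lemma exists_other_between {γ α β : Finset V} (hγ : γ ∈ K.faces) (hβ : β ∈ K.faces)
    (h1 : γ ⊂ α) (c1 : α.card = γ.card + 1) (h2 : α ⊂ β) (c2 : β.card = α.card + 1) :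
    ∃ α' ∈ K.faces, α' ≠ α ∧ γ ⊂ α' ∧ α'.card = γ.card + 1 ∧ α' ⊂ β ∧ β.card = α'.card + 1 := by
  obtain ⟨x, hx, hxγ⟩ := Finset.exists_of_ssubset h1
  have hxβ : x ∈ β := h2.1 hx
  have hc : (β.erase x).card + 1 = β.card := Finset.card_erase_add_one hxβ
  have hsub : γ ⊆ β.erase x := fun v hv =>
    Finset.mem_erase.2 ⟨fun h => hxγ (h ▸ hv), h2.1 (h1.1 hv)⟩
  have hγ0 : γ.Nonempty := Finset.nonempty_iff_ne_empty.2 fun h => K.not_empty_mem (h ▸ hγ)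
  refine ⟨β.erase x, K.down_closed β hβ _ (Finset.erase_subset _ _) (hγ0.mono hsub), ?_, ?_,
    by omega, Finset.erase_ssubset hxβ, by omega⟩
  · intro h
    rw [← h] at hx
    simp at hx
  · refine Finset.ssubset_iff_subset_ne.2 ⟨hsub, fun h => ?_⟩
    have := congrArg Finset.card h
    omega

/-- A simplex is not both the top of one gradient pair and the bottom of another. -/
lemma GradPair.exclusive (hf : IsDiscreteMorse K f) {γ α β : Finset V}
    (h : GradPair K f γ α) (h' : GradPair K f α β) : False := by
  obtain ⟨α', hα', hne, h1, c1, h2, c2⟩ :=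
    exists_other_between h.1 h'.2.1 h.2.2.1 h.2.2.2.1 h'.2.2.1 h'.2.2.2.1
  have l1 : f γ < f α' := by
    by_contra! hle
    exact hne (GradPair.top_unique hf ⟨h.1, hα', h1, c1, hle⟩ h)
  have l2 : f α' < f β := by
    by_contra! hle
    exact hne (GradPair.bot_unique hf ⟨hα', h'.2.1, h2, c2, hle⟩ h')
  linarith [h.2.2.2.2, h'.2.2.2.2]

/-- A coface `β` of `τ` can be replaced by a coface of codimension one without increasing `f`:
of two facets of `β` containing `τ`, one has a smaller value than `β`. -/
lemma exists_coface_le (hf : IsDiscreteMorse K f) {τ : Finset V} (hτ : τ ∈ K.faces) :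
    ∀ (k : ℕ) (β : Finset V), β.card = k → β ∈ K.faces → τ ⊂ β →
      ∃ τ' ∈ K.faces, τ ⊂ τ' ∧ τ'.card = τ.card + 1 ∧ f τ' ≤ f β := by
  intro k
  induction k with
  | zero =>
    intro β hc _ h
    have := Finset.card_lt_card h
    omega
  | succ k ih =>
    intro β hc hβ h
    have hlt := Finset.card_lt_card h
    by_cases hk : k = τ.card
    · exact ⟨β, hβ, h, by omega, le_rfl⟩
    have hτ0 : τ.Nonempty := Finset.nonempty_iff_ne_empty.2 fun h => K.not_empty_mem (h ▸ hτ)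
    have hcard : 1 < (β \ τ).card := by
      rw [Finset.card_sdiff_of_subset h.1]; omega
    obtain ⟨x, hx, y, hy, hxy⟩ := Finset.one_lt_card.1 hcard
    have key : ∀ z ∈ β \ τ, β.erase z ∈ K.faces ∧ τ ⊂ β.erase z ∧ (β.erase z).card = k := by
      intro z hz
      rw [Finset.mem_sdiff] at hz
      have hc' := Finset.card_erase_add_one hz.1
      have hs : τ ⊆ β.erase z := fun v hv =>
        Finset.mem_erase.2 ⟨fun e => hz.2 (e ▸ hv), h.1 hv⟩
      refine ⟨K.down_closed β hβ _ (Finset.erase_subset _ _) (hτ0.mono hs),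
        Finset.ssubset_iff_subset_ne.2 ⟨hs, fun e => ?_⟩, by omega⟩
      have := congrArg Finset.card e
      omega
    have hdesc : ∀ z ∈ β \ τ, f (β.erase z) ≤ f β →
        ∃ τ' ∈ K.faces, τ ⊂ τ' ∧ τ'.card = τ.card + 1 ∧ f τ' ≤ f β := by
      intro z hz hle
      obtain ⟨k1, k2, k3⟩ := key z hz
      obtain ⟨τ', a1, a2, a3, a4⟩ := ih _ k3 k1 k2
      exact ⟨τ', a1, a2, a3, a4.trans hle⟩
    by_cases hle : f (β.erase x) ≤ f β
    · exact hdesc x hx hle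
    by_cases hle' : f (β.erase y) ≤ f β
    · exact hdesc y hy hle'
    exfalso
    have hpair : ∀ z ∈ β \ τ, ¬ f (β.erase z) ≤ f β → GradPair K f (β.erase z) β := by
      intro z hz hn
      obtain ⟨k1, -, k3⟩ := key z hz
      exact ⟨k1, hβ, Finset.erase_ssubset (Finset.mem_sdiff.1 hz).1, by omega, (not_le.1 hn).le⟩
    have e := GradPair.bot_unique hf (hpair x hx hle) (hpair y hy hle')
    have hmem : y ∈ β.erase x := Finset.mem_erase.2 ⟨hxy.symm, (Finset.mem_sdiff.1 hy).1⟩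
    rw [e] at hmem
    simp at hmem

/-- In a subcomplex `M ⊇ L` whose simplices outside `L` are matched by gradient pairs, the pair
whose top has the largest value is free. -/
lemma isFreeFace_of_max (hf : IsDiscreteMorse K f) {M L : FinSC V}
    (hMK : M.faces ⊆ K.faces)
    (hpair : ∀ ρ ∈ M.faces \ L.faces, ∃ σ τ, GradPair K f σ τ ∧ σ ∈ M.faces \ L.faces ∧
      τ ∈ M.faces \ L.faces ∧ (ρ = σ ∨ ρ = τ))
    {σ τ : Finset V} (h : GradPair K f σ τ) (hσ : σ ∈ M.faces \ L.faces)
    (hτ : τ ∈ M.faces \ L.faces)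
    (hmax : ∀ σ' τ', GradPair K f σ' τ' → τ' ∈ M.faces \ L.faces → f τ' ≤ f τ) :
    IsFreeFace M σ τ := by
  rw [Finset.mem_sdiff] at hσ hτ
  have hσ0 : σ.Nonempty := Finset.nonempty_iff_ne_empty.2 fun e => M.not_empty_mem (e ▸ hσ.1)
  -- A coface of `σ` in `M` of codimension one is the top of a pair or the bottom of one; either way
  -- there is a pair in `M \ L` whose top has a value larger than `f τ`, unless the coface is `τ`.
  have hcod : ∀ ρ ∈ M.faces, σ ⊂ ρ → ρ.card = σ.card + 1 → ρ = τ := by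
    intro ρ hρ hσρ hc
    by_contra hne
    have hlt : f σ < f ρ := by
      by_contra! hle
      exact hne (GradPair.top_unique hf ⟨h.1, hMK hρ, hσρ, hc, hle⟩ h)
    have hρL : ρ ∈ M.faces \ L.faces :=
      Finset.mem_sdiff.2 ⟨hρ, fun hL => hσ.2 (L.down_closed ρ hL σ hσρ.1 hσ0)⟩
    obtain ⟨σ', τ', hp, hσ', hτ', rfl | rfl⟩ := hpair ρ hρL
    · obtain ⟨α', hα', hne', h1, c1, h2, c2⟩ :=
        exists_other_between h.1 hp.2.1 hσρ hc hp.2.2.1 hp.2.2.2.1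
      have l1 : f α' < f τ' := by
        by_contra! hle
        exact hne' (GradPair.bot_unique hf ⟨hα', hp.2.1, h2, c2, hle⟩ hp)
      have l2 : f τ ≤ f α' := by
        by_cases e : α' = τ
        · rw [e]
        · by_contra! hl
          exact e (GradPair.top_unique hf
            ⟨h.1, hα', h1, c1, hl.le.trans h.2.2.2.2⟩ h)
      linarith [hmax _ _ hp hτ']
    · linarith [hmax _ _ hp hτ', h.2.2.2.2]
  refine ⟨hσ.1, hτ.1, h.2.2.1, fun ρ hρ hσρ => ?_⟩
  have hins : ∀ x ∈ ρ \ σ, insert x σ = τ := by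
    intro x hx
    rw [Finset.mem_sdiff] at hx
    refine hcod _ (M.down_closed ρ hρ _ (Finset.insert_subset hx.1 hσρ.1) (by simp))
      (Finset.ssubset_insert hx.2) (Finset.card_insert_of_notMem hx.2)
  obtain ⟨x, hx, hxσ⟩ := Finset.exists_of_ssubset hσρ
  have hxτ := hins x (Finset.mem_sdiff.2 ⟨hx, hxσ⟩)
  rw [← hxτ]
  refine Finset.Subset.antisymm (fun y hy => ?_) (Finset.insert_subset hx hσρ.1)
  by_cases hyσ : y ∈ σ
  · exact Finset.mem_insert_of_mem hyσ
  · rw [hxτ, ← hins y (Finset.mem_sdiff.2 ⟨hy, hyσ⟩)]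
    exact Finset.mem_insert_self _ _

/-- The gradient pairs outside `L` can be removed one by one, in order of decreasing value of
their tops. -/
lemma collapses_of_paired (hf : IsDiscreteMorse K f) {w : Finset V → R} (hw : IsWeight K w)
    (L : FinSC V) : ∀ (k : ℕ) (M : FinSC V), M.faces.card = k → L.faces ⊆ M.faces →
    M.faces ⊆ K.faces →
    (∀ ρ ∈ M.faces \ L.faces, ∃ σ τ, GradPair K f σ τ ∧ σ ∈ M.faces \ L.faces ∧
      τ ∈ M.faces \ L.faces ∧ (ρ = σ ∨ ρ = τ)) →
    (∀ σ τ, GradPair K f σ τ → τ ∈ M.faces \ L.faces → w σ = w τ ∧ w τ ≠ 0) →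
    Collapses M L ∧ ∀ i : ℕ, Nonempty (wHomology M w i ≃ₗ[R] wHomology L w i) := by
  intro k
  induction k using Nat.strong_induction_on with
  | _ k ih =>
  intro M hk hLM hMK hpair hwt
  by_cases hemp : M.faces \ L.faces = ∅
  · have e : M = L := by
      have : M.faces = L.faces :=
        Finset.Subset.antisymm (Finset.sdiff_eq_empty_iff_subset.1 hemp) hLM
      cases M; cases L; cases this; rfl
    subst e
    exact ⟨Relation.ReflTransGen.refl, fun i => ⟨LinearEquiv.refl R _⟩⟩
  obtain ⟨ρ, hρ⟩ := Finset.nonempty_iff_ne_empty.2 hemp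
  classical
  let T := (M.faces \ L.faces).filter (fun τ => ∃ σ, GradPair K f σ τ ∧ σ ∈ M.faces \ L.faces)
  have hT : T.Nonempty := by
    obtain ⟨σ, τ, hp, h1, h2, -⟩ := hpair ρ hρ
    exact ⟨τ, Finset.mem_filter.2 ⟨h2, σ, hp, h1⟩⟩
  obtain ⟨τ, hτT, hmax⟩ := Finset.exists_max_image T f hT
  obtain ⟨hτ, σ, hp, hσ⟩ := Finset.mem_filter.1 hτT
  have hfree : IsFreeFace M σ τ := by
    refine isFreeFace_of_max hf hMK hpair hp hσ hτ fun σ' τ' hp' hτ' => ?_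
    refine hmax τ' (Finset.mem_filter.2 ⟨hτ', σ', hp', ?_⟩)
    obtain ⟨σ₁, τ₁, hp₁, hσ₁, hτ₁, rfl | rfl⟩ := hpair τ' hτ'
    · exact (GradPair.exclusive hf hp' hp₁).elim
    · rwa [GradPair.bot_unique hf hp' hp₁]
  obtain ⟨hwe, hw0⟩ := hwt σ τ hp hτ
  let M' : FinSC V :=
    { faces := M.faces \ {σ, τ}
      not_empty_mem := fun h => M.not_empty_mem (Finset.mem_sdiff.1 h).1
      down_closed := by
        intro ρ hρ ρ' hsub hne
        simp only [Finset.mem_sdiff, Finset.mem_insert, Finset.mem_singleton, not_or] at hρ ⊢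
        refine ⟨M.down_closed ρ hρ.1 ρ' hsub hne, ?_, ?_⟩
        · rintro rfl
          exact hρ.2.2 (hfree.2.2.2 ρ hρ.1
            (Finset.ssubset_iff_subset_ne.2 ⟨hsub, Ne.symm hρ.2.1⟩))
        · rintro rfl
          exact hρ.2.2 (hfree.2.2.2 ρ hρ.1 (hfree.2.2.1.trans_subset hsub)) }
  have hM' : ∀ ρ, ρ ∈ M'.faces \ L.faces ↔ ρ ∈ M.faces \ L.faces ∧ ρ ≠ σ ∧ ρ ≠ τ := by
    intro ρ
    simp only [M', Finset.mem_sdiff, Finset.mem_insert, Finset.mem_singleton, not_or]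
    tauto
  have hcard : M'.faces.card < k := by
    rw [← hk]
    refine Finset.card_lt_card (Finset.ssubset_iff_subset_ne.2 ⟨Finset.sdiff_subset, fun e => ?_⟩)
    have : σ ∈ M'.faces := e ▸ hfree.1
    simp [M'] at this
  obtain ⟨hcol, hiso⟩ := ih _ hcard M' rfl
    (by
      intro ρ hρL
      simp only [M', Finset.mem_sdiff, Finset.mem_insert, Finset.mem_singleton]
      refine ⟨hLM hρL, ?_⟩
      rintro (rfl | rfl)
      · exact (Finset.mem_sdiff.1 hσ).2 hρL
      · exact (Finset.mem_sdiff.1 hτ).2 hρL)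
    (fun ρ h => hMK (Finset.mem_sdiff.1 h).1)
    (by
      intro ρ hρ
      rw [hM'] at hρ
      obtain ⟨σ₁, τ₁, hp₁, hσ₁, hτ₁, hor⟩ := hpair ρ hρ.1
      -- distinct gradient pairs are disjoint
      have hne : ¬ (σ₁ = σ ∧ τ₁ = τ) := by
        rintro ⟨rfl, rfl⟩
        tauto
      refine ⟨σ₁, τ₁, hp₁, (hM' _).2 ⟨hσ₁, ?_, ?_⟩, (hM' _).2 ⟨hτ₁, ?_, ?_⟩, hor⟩
      · rintro rfl
        exact hne ⟨rfl, GradPair.top_unique hf hp₁ hp⟩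
      · rintro rfl
        exact GradPair.exclusive hf hp hp₁
      · rintro rfl
        exact GradPair.exclusive hf hp₁ hp
      · rintro rfl
        exact hne ⟨GradPair.bot_unique hf hp₁ hp, rfl⟩)
    (fun σ₁ τ₁ hp₁ hτ₁ => hwt σ₁ τ₁ hp₁ ((hM' _).1 hτ₁).1)
  refine ⟨Relation.ReflTransGen.head ⟨σ, τ, hfree, rfl⟩ hcol, fun i => ?_⟩
  obtain ⟨e₁⟩ := nonempty_wHomology_equiv (L := M')
    (fun ρ h ρ' h' => hw ρ (hMK h) ρ' (hMK h')) hfree hp.2.2.2.1 hwe hw0 rfl i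
  obtain ⟨e₂⟩ := hiso i
  exact ⟨e₁.trans e₂⟩

/-- If `(c, d]` contains no value of a critical simplex and all simplices with value in `(c, d]`
are `w`-simple, then `K(d)` collapses onto `K(c)` with isomorphic weighted homology. -/
lemma levelSub_collapses (hf : IsDiscreteMorse K f) {w : Finset V → R} (hw : IsWeight K w)
    {c d : ℝ} (hcd : c ≤ d)
    (hnc : ∀ σ ∈ K.faces, f σ ∈ Set.Ioc c d → ¬ IsCritical K f σ)
    (hws : ∀ σ ∈ K.faces, f σ ∈ Set.Ioc c d → IsWSimple K w f σ) :
    Collapses (levelSub K f d) (levelSub K f c) ∧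
      ∀ i : ℕ, Nonempty (wHomology (levelSub K f d) w i ≃ₗ[R]
        wHomology (levelSub K f c) w i) := by
  have hmem : ∀ e ρ, ρ ∈ (levelSub K f e).faces ↔
      ρ ∈ K.faces ∧ ∃ β ∈ K.faces, ρ ⊆ β ∧ f β ≤ e := by
    intro e ρ; simp [levelSub]
  -- a simplex of `K(e)` with value above `e` has a codimension-one coface with value at most `e`
  have hco : ∀ e ρ, ρ ∈ (levelSub K f e).faces → e < f ρ →
      ∃ τ, GradPair K f ρ τ ∧ f τ ≤ e := by
    intro e ρ hρ hlt
    obtain ⟨hρK, β, hβ, hsub, hle⟩ := (hmem e ρ).1 hρ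
    have hne : ρ ≠ β := by
      rintro rfl
      linarith
    obtain ⟨τ, h1, h2, h3, h4⟩ := exists_coface_le hf hρK _ β rfl hβ
      (Finset.ssubset_iff_subset_ne.2 ⟨hsub, hne⟩)
    exact ⟨τ, ⟨hρK, h1, h2, h3, by linarith⟩, by linarith⟩
  have hgt : ∀ ρ, ρ ∈ K.faces → ρ ∉ (levelSub K f c).faces → c < f ρ := by
    intro ρ hρ hn
    by_contra! hle
    exact hn ((hmem c ρ).2 ⟨hρ, ρ, hρ, subset_rfl, hle⟩)
  have hup : ∀ σ τ, GradPair K f σ τ → f τ ≤ d → σ ∉ (levelSub K f c).faces →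
      σ ∈ (levelSub K f d).faces \ (levelSub K f c).faces ∧
      τ ∈ (levelSub K f d).faces \ (levelSub K f c).faces := by
    intro σ τ hp hle hσ
    simp only [Finset.mem_sdiff]
    refine ⟨⟨(hmem d σ).2 ⟨hp.1, τ, hp.2.1, hp.2.2.1.1, hle⟩, hσ⟩,
      (hmem d τ).2 ⟨hp.2.1, τ, hp.2.1, subset_rfl, hle⟩, fun h => hσ ?_⟩
    obtain ⟨-, β, hβ, hs, hl⟩ := (hmem c τ).1 h
    exact (hmem c σ).2 ⟨hp.1, β, hβ, hp.2.2.1.1.trans hs, hl⟩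
  refine collapses_of_paired hf hw _ _ _ rfl ?_ (fun ρ h => ((hmem d ρ).1 h).1) ?_ ?_
  · intro ρ h
    obtain ⟨h1, β, h2, h3, h4⟩ := (hmem c ρ).1 h
    exact (hmem d ρ).2 ⟨h1, β, h2, h3, h4.trans hcd⟩
  · intro ρ hρ
    obtain ⟨hρd, hρc⟩ := Finset.mem_sdiff.1 hρ
    have hρK := ((hmem d ρ).1 hρd).1
    have hlt := hgt ρ hρK hρc
    by_cases hd : f ρ ≤ d
    · have := hnc ρ hρK ⟨hlt, hd⟩
      rw [IsCritical, not_and_or] at this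
      push Not at this
      rcases this with ⟨β, h1, h2, h3, h4⟩ | ⟨γ, h1, h2, h3, h4⟩
      · have hp : GradPair K f ρ β := ⟨hρK, h1, h2, h3, h4⟩
        obtain ⟨k1, k2⟩ := hup ρ β hp (h4.trans hd) hρc
        exact ⟨ρ, β, hp, k1, k2, Or.inl rfl⟩
      · have hp : GradPair K f γ ρ := ⟨h1, hρK, h2, h3.symm, h4⟩
        have hγ : γ ∉ (levelSub K f c).faces := by
          intro hγ
          obtain ⟨τ, hp', hle⟩ := hco c γ hγ (by linarith)
          have := GradPair.top_unique hf hp hp'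
          subst this
          linarith
        obtain ⟨k1, k2⟩ := hup γ ρ hp hd hγ
        exact ⟨γ, ρ, hp, k1, k2, Or.inr rfl⟩
    · obtain ⟨τ, hp, hle⟩ := hco d ρ hρd (not_le.1 hd)
      obtain ⟨k1, k2⟩ := hup ρ τ hp hle hρc
      exact ⟨ρ, τ, hp, k1, k2, Or.inl rfl⟩
  · intro σ τ hp hτ
    obtain ⟨hτd, hτc⟩ := Finset.mem_sdiff.1 hτ
    have hlt := hgt τ hp.2.1 hτc
    have hle : f τ ≤ d := by
      by_contra! hd
      obtain ⟨τ', hp', -⟩ := hco d τ hτd hd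
      exact GradPair.exclusive hf hp hp'
    obtain ⟨h0, h1⟩ := hws τ hp.2.1 ⟨hlt, hle⟩
    exact ⟨h1 σ hp.1 hp.2.2.1 hp.2.2.2.1.symm hp.2.2.2.2, h0⟩

end Morse

/-! ### Removal of the critical simplex -/

/-- second part of Theorem `thm:mainremoval`.  Let `(K,w)` be a
weighted simplicial complex over an integral domain `R` with a discrete Morse function
`f`.  Suppose `α^{(n)}` is a critical simplex with `f α ∈ (a,b]`, `f⁻¹((a,b])` contains
no other critical simplices, and `a' = min { x ∈ [a, f α) : f⁻¹((x, f α]) = {α} }`.  If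
every simplex in `f⁻¹((a,a']) ∪ f⁻¹((f α, b])` is `w`-simple, then
`K(b) ↘ K(f α)` and `K(a') ↘ K(a)` are collapses that preserve weighted homology. -/
theorem levelSub_critical_removal_collapses
    (K : FinSC V) (w : Finset V → R) (hw : IsWeight K w)
    (f : Finset V → ℝ) (hf : IsDiscreteMorse K f)
    (a b : ℝ) (n : ℕ) (α : Finset V) (hα : α ∈ K.faces) (hαc : α.card = n + 1)
    (hcrit : IsCritical K f α) (hfα : f α ∈ Set.Ioc a b)
    (honly : ∀ σ ∈ K.faces, f σ ∈ Set.Ioc a b → IsCritical K f σ → σ = α)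
    (a' : ℝ)
    (ha' : IsLeast {x : ℝ | x ∈ Set.Ico a (f α) ∧
      ∀ σ ∈ K.faces, f σ ∈ Set.Ioc x (f α) → σ = α} a')
    (hws : ∀ σ ∈ K.faces,
      (f σ ∈ Set.Ioc a a' ∨ f σ ∈ Set.Ioc (f α) b) → IsWSimple K w f σ) :
    (Collapses (levelSub K f b) (levelSub K f (f α)) ∧
      ∀ i : ℕ, Nonempty (wHomology (levelSub K f b) w i ≃ₗ[R]
        wHomology (levelSub K f (f α)) w i)) ∧
    (Collapses (levelSub K f a') (levelSub K f a) ∧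
      ∀ i : ℕ, Nonempty (wHomology (levelSub K f a') w i ≃ₗ[R]
        wHomology (levelSub K f a) w i)) := by
  obtain ⟨⟨haa', ha'α⟩, -⟩ := ha'.1
  refine ⟨levelSub_collapses hf hw hfα.2 (fun σ hσ hσf hc => ?_)
    (fun σ hσ h => hws σ hσ (Or.inr h)),
    levelSub_collapses hf hw haa' (fun σ hσ hσf hc => ?_) (fun σ hσ h => hws σ hσ (Or.inl h))⟩
  · have := honly σ hσ ⟨hfα.1.trans hσf.1, hσf.2⟩ hc
    subst this
    exact lt_irrefl _ hσf.1
  · have := honly σ hσ ⟨hσf.1, hσf.2.trans (ha'α.le.trans hfα.2)⟩ hc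
    subst this
    exact absurd hσf.2 (not_le.2 ha'α)

end FinSC
end

section
/- Let R be a principal ideal domain and let (K,w) be a weighted simplicial complex over R with a discrete Morse function f. Suppose α^{(n)} is a critical simplex with f(α) ∈ (a,b], f^{-1}((a,b]) contains no other critical simplices, a' = min{ x ∈ [a, f(α)) : f^{-1}((x, f(α)]) = {α} }, every simplex in f^{-1}((a,a']) ∪ f^{-1}((f(α),b]) is w-simple, and w(α) ≠ 0. Then: (1) H_k(K(a'), w) ≅ H_k(K(f(α)), w) for k ∉ {n−1, n}; (2) H_{n−1}(K(f(α)), w) ≅ H_{n−1}(K(a'), w)/{ r·[∂^w α] : r ∈ R }, where [∂^w α] is the homology class of the weighted boundary of α in H_{n−1}(K(a'), w); and (3) H_n(K(f(α)), w) ≅ H_n(K(a'), w) ⊕ R if [∂^w α] is a torsion element, and H_n(K(f(α)), w) ≅ H_n(K(a'), w) otherwise. -/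
namespace FinSC

variable {V : Type*} [LinearOrder V] {R : Type*} [CommRing R] [IsDomain R]

/-! ### Attaching a single simplex -/

/-- `L'` is obtained from `L` by adding the single new simplex `α`. -/
structure IsAttach (L L' : FinSC V) (α : Finset V) : Prop where
  mem_iff : ∀ σ, σ ∈ L'.faces ↔ σ = α ∨ σ ∈ L.faces
  notMem : α ∉ L.faces

lemma dFace_subset (σ : Finset V) (i : ℕ) : dFace σ i ⊆ σ := by
  unfold dFace
  split
  · exact Finset.erase_subset _ _
  · exact subset_rfl

namespace IsAttach

variable {L L' : FinSC V} {α : Finset V}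

/-- The inclusion of the basis of `C_k(L, w)` into that of `C_k(L', w)`. -/
def idx (h : IsAttach L L' α) (w : Finset V → R) (k : ℕ) (σ : ChainIdx L w k) :
    ChainIdx L' w k :=
  ⟨σ.1, (h.mem_iff _).2 (Or.inr σ.2.1), σ.2.2⟩

lemma idx_injective (h : IsAttach L L' α) (w : Finset V → R) (k : ℕ) :
    Function.Injective (h.idx w k) := by
  intro σ τ e
  have := congrArg Subtype.val e
  exact Subtype.ext this

/-- The inclusion of chain groups `C_k(L, w) → C_k(L', w)`. -/
noncomputable def incl (h : IsAttach L L' α) (w : Finset V → R) (k : ℕ) :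
    WChain L w k →ₗ[R] WChain L' w k :=
  Finsupp.lmapDomain R R (h.idx w k)

lemma incl_injective (h : IsAttach L L' α) (w : Finset V → R) (k : ℕ) :
    Function.Injective (h.incl w k) :=
  Finsupp.mapDomain_injective (h.idx_injective w k)

lemma incl_single (h : IsAttach L L' α) (w : Finset V → R) (k : ℕ)
    (σ : ChainIdx L w k) (r : R) :
    h.incl w k (Finsupp.single σ r) = Finsupp.single (h.idx w k σ) r :=
  Finsupp.mapDomain_single

/-- The boundary of `σ` is the same in `L` and in `L'` when `α` is not a facet of `σ`. -/
lemma incl_bdElem (h : IsAttach L L' α) (w : Finset V → R) (k : ℕ) (σ : Finset V)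
    (hσ : ∀ i, (dFace σ i).card = k + 1 → dFace σ i ≠ α) :
    h.incl w k (bdElem L w k σ) = bdElem L' w k σ := by
  unfold bdElem
  rw [map_sum]
  refine Finset.sum_congr rfl fun i _ => ?_
  by_cases hc : dFace σ i ∈ L.faces ∧ (dFace σ i).card = k + 1 ∧ w (dFace σ i) ≠ 0
  · have hc' : dFace σ i ∈ L'.faces ∧ (dFace σ i).card = k + 1 ∧ w (dFace σ i) ≠ 0 :=
      ⟨(h.mem_iff _).2 (Or.inr hc.1), hc.2⟩
    rw [dif_pos hc, dif_pos hc', incl_single]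
    rfl
  · have hc' : ¬ (dFace σ i ∈ L'.faces ∧ (dFace σ i).card = k + 1 ∧ w (dFace σ i) ≠ 0) := by
      rintro ⟨h1, h2, h3⟩
      rcases (h.mem_iff _).1 h1 with h4 | h4
      · exact hσ i h2 h4
      · exact hc ⟨h4, h2, h3⟩
    rw [dif_neg hc, dif_neg hc', map_zero]

/-- The inclusion is a chain map. -/
lemma boundary_incl (h : IsAttach L L' α) (w : Finset V → R) (k : ℕ)
    (x : WChain L w (k + 1)) :
    wBoundary L' w k (h.incl w (k + 1) x) = h.incl w k (wBoundary L w k x) := by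
  induction x using Finsupp.induction_linear with
  | zero => simp
  | add x y hx hy => simp only [map_add, hx, hy]
  | single σ r =>
    rw [incl_single]
    unfold wBoundary
    rw [Finsupp.linearCombination_single, Finsupp.linearCombination_single, map_smul,
      incl_bdElem]
    · rfl
    · intro i hi e
      refine h.notMem (L.down_closed σ.1 σ.2.1 α (e ▸ dFace_subset _ _) ?_)
      rw [← e, ← Finset.card_pos]
      omega

lemma incl_mem_cycles_iff (h : IsAttach L L' α) (w : Finset V → R) (k : ℕ)
    (x : WChain L w k) :
    h.incl w k x ∈ cycles L' w k ↔ x ∈ cycles L w k := by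
  cases k with
  | zero => simp [cycles]
  | succ k =>
    simp only [cycles, LinearMap.mem_ker, boundary_incl]
    exact map_eq_zero_iff _ (h.incl_injective w k)

lemma incl_mem_bdries (h : IsAttach L L' α) (w : Finset V → R) (k : ℕ)
    (x : WChain L w k) (hx : x ∈ bdries L w k) : h.incl w k x ∈ bdries L' w k := by
  obtain ⟨y, rfl⟩ := hx
  exact ⟨h.incl w (k + 1) y, h.boundary_incl w k y⟩

/-- In degrees other than `dim α`, the inclusion of chain groups is onto. -/
lemma incl_surjective (h : IsAttach L L' α) (w : Finset V → R) (k : ℕ)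
    (hk : α.card ≠ k + 1) : Function.Surjective (h.incl w k) := by
  refine Finsupp.mapDomain_surjective fun σ => ?_
  have h1 : σ.1 ∈ L.faces := by
    rcases (h.mem_iff _).1 σ.2.1 with h1 | h1
    · exact absurd (h1 ▸ σ.2.2.1) hk
    · exact h1
  exact ⟨⟨σ.1, h1, σ.2.2⟩, rfl⟩

lemma mem_bdries_of_incl (h : IsAttach L L' α) (w : Finset V → R) (k : ℕ)
    (hk : α.card ≠ k + 2) (x : WChain L w k) (hx : h.incl w k x ∈ bdries L' w k) :
    x ∈ bdries L w k := by
  obtain ⟨y, hy⟩ := hx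
  obtain ⟨z, rfl⟩ := h.incl_surjective w (k + 1) hk y
  rw [boundary_incl] at hy
  exact ⟨z, h.incl_injective w k hy⟩

/-! ### The induced map in homology -/

/-- The map `H_k(L, w) → H_k(L', w)` induced by inclusion. -/
noncomputable def homMap (h : IsAttach L L' α) (w : Finset V → R) (k : ℕ) :
    wHomology L w k →ₗ[R] wHomology L' w k :=
  LinearMap.restrict
    (Submodule.mapQ (bdries L w k) (bdries L' w k) (h.incl w k) (h.incl_mem_bdries w k))
    (by
      rintro _ ⟨x, hx, rfl⟩
      exact ⟨h.incl w k x, (h.incl_mem_cycles_iff w k x).2 hx, rfl⟩)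

end IsAttach

lemma exists_classOf (L : FinSC V) (w : Finset V → R) (k : ℕ) (u : wHomology L w k) :
    ∃ z hz, u = classOf L w k z hz := by
  obtain ⟨_, z, hz, rfl⟩ := u
  exact ⟨z, hz, rfl⟩

lemma classOf_eq_zero_iff (L : FinSC V) (w : Finset V → R) (k : ℕ) (z : WChain L w k)
    (hz : z ∈ cycles L w k) : classOf L w k z hz = 0 ↔ z ∈ bdries L w k := by
  rw [← Submodule.coe_eq_zero]
  exact Submodule.Quotient.mk_eq_zero _

lemma smul_classOf (L : FinSC V) (w : Finset V → R) (k : ℕ) (z : WChain L w k)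
    (hz : z ∈ cycles L w k) (r : R) :
    r • classOf L w k z hz = classOf L w k (r • z) (Submodule.smul_mem _ r hz) := rfl

lemma sub_classOf (L : FinSC V) (w : Finset V → R) (k : ℕ) (y z : WChain L w k)
    (hy : y ∈ cycles L w k) (hz : z ∈ cycles L w k) :
    classOf L w k y hy - classOf L w k z hz
      = classOf L w k (y - z) (Submodule.sub_mem _ hy hz) := rfl

namespace IsAttach

variable {L L' : FinSC V} {α : Finset V}

lemma homMap_classOf (h : IsAttach L L' α) (w : Finset V → R) (k : ℕ) (z : WChain L w k)
    (hz : z ∈ cycles L w k) :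
    h.homMap w k (classOf L w k z hz)
      = classOf L' w k (h.incl w k z) ((h.incl_mem_cycles_iff w k z).2 hz) := rfl

lemma homMap_surjective (h : IsAttach L L' α) (w : Finset V → R) (k : ℕ)
    (hk : α.card ≠ k + 1) : Function.Surjective (h.homMap w k) := by
  intro u
  obtain ⟨z, hz, rfl⟩ := exists_classOf L' w k u
  obtain ⟨y, rfl⟩ := h.incl_surjective w k hk z
  exact ⟨classOf L w k y ((h.incl_mem_cycles_iff w k y).1 hz), rfl⟩

lemma homMap_injective (h : IsAttach L L' α) (w : Finset V → R) (k : ℕ)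
    (hk : α.card ≠ k + 2) : Function.Injective (h.homMap w k) := by
  rw [injective_iff_map_eq_zero]
  intro u hu
  obtain ⟨z, hz, rfl⟩ := exists_classOf L w k u
  rw [homMap_classOf, classOf_eq_zero_iff] at hu
  exact (classOf_eq_zero_iff _ _ _ _ _).2 (h.mem_bdries_of_incl w k hk z hu)

/-! ### The degrees `dim α - 1` and `dim α` -/

/-- The basis element of `C_{m+1}(L', w)` given by the new simplex `α`. -/
def newIdx (h : IsAttach L L' α) (w : Finset V → R) (m : ℕ) (hc : α.card = m + 2)
    (hα : w α ≠ 0) : ChainIdx L' w (m + 1) :=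
  ⟨α, (h.mem_iff α).2 (Or.inl rfl), hc, hα⟩

/-- Every chain of `L'` in degree `dim α` is a chain of `L` plus a multiple of `α`. -/
lemma exists_decomp (h : IsAttach L L' α) (w : Finset V → R) (m : ℕ)
    (hc : α.card = m + 2) (hα : w α ≠ 0) (x : WChain L' w (m + 1)) :
    ∃ y, x = h.incl w (m + 1) y
      + x (h.newIdx w m hc hα) • Finsupp.single (h.newIdx w m hc hα) 1 := by
  induction x using Finsupp.induction_linear with
  | zero => exact ⟨0, by simp⟩
  | add x y hx hy =>
    obtain ⟨x', hx⟩ := hx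
    obtain ⟨y', hy⟩ := hy
    refine ⟨x' + y', ?_⟩
    rw [map_add, Finsupp.add_apply, add_smul]
    nth_rewrite 1 [hx, hy]
    abel
  | single σ r =>
    rcases (h.mem_iff _).1 σ.2.1 with h1 | h1
    · have : σ = h.newIdx w m hc hα := Subtype.ext h1
      subst this
      exact ⟨0, by simp⟩
    · refine ⟨Finsupp.single ⟨σ.1, h1, σ.2.2⟩ r, ?_⟩
      have hne : σ ≠ h.newIdx w m hc hα := by
        rintro rfl
        exact h.notMem h1
      rw [incl_single, Finsupp.single_eq_of_ne hne.symm, zero_smul, add_zero]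
      rfl

lemma incl_apply_newIdx (h : IsAttach L L' α) (w : Finset V → R) (m : ℕ)
    (hc : α.card = m + 2) (hα : w α ≠ 0) (y : WChain L w (m + 1)) :
    h.incl w (m + 1) y (h.newIdx w m hc hα) = 0 := by
  refine Finsupp.mapDomain_of_notMem_range _ _ ?_
  rintro ⟨σ, e⟩
  have : σ.1 = α := congrArg Subtype.val e
  exact h.notMem (this ▸ σ.2.1)

lemma boundary_new (h : IsAttach L L' α) (w : Finset V → R) (m : ℕ)
    (hc : α.card = m + 2) (hα : w α ≠ 0) :
    wBoundary L' w m (Finsupp.single (h.newIdx w m hc hα) 1)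
      = h.incl w m (bdElem L w m α) := by
  unfold wBoundary
  rw [Finsupp.linearCombination_single, one_smul, incl_bdElem]
  · rfl
  · intro i hi e
    rw [e] at hi
    omega

lemma boundary_decomp (h : IsAttach L L' α) (w : Finset V → R) (m : ℕ)
    (hc : α.card = m + 2) (hα : w α ≠ 0) (y : WChain L w (m + 1)) (r : R) :
    wBoundary L' w m (h.incl w (m + 1) y + r • Finsupp.single (h.newIdx w m hc hα) 1)
      = h.incl w m (wBoundary L w m y + r • bdElem L w m α) := by
  rw [map_add, map_smul, boundary_incl, boundary_new, map_add, map_smul]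

/-- In degree `dim α - 1` the induced map kills exactly the multiples of `[∂^w α]`. -/
lemma ker_homMap (h : IsAttach L L' α) (w : Finset V → R) (m : ℕ)
    (hc : α.card = m + 2) (hα : w α ≠ 0) (hcyc : bdElem L w m α ∈ cycles L w m) :
    LinearMap.ker (h.homMap w m)
      = Submodule.span R {classOf L w m (bdElem L w m α) hcyc} := by
  apply le_antisymm
  · intro u hu
    obtain ⟨z, hz, rfl⟩ := exists_classOf L w m u
    rw [LinearMap.mem_ker, homMap_classOf, classOf_eq_zero_iff] at hu
    obtain ⟨x, hx⟩ := hu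
    obtain ⟨y, hy⟩ := h.exists_decomp w m hc hα x
    rw [hy, boundary_decomp] at hx
    have hx := h.incl_injective w m hx
    rw [Submodule.mem_span_singleton]
    refine ⟨x (h.newIdx w m hc hα), ?_⟩
    rw [← sub_eq_zero, smul_classOf, sub_classOf, classOf_eq_zero_iff, ← hx]
    exact ⟨-y, by rw [map_neg]; abel⟩
  · rw [Submodule.span_le, Set.singleton_subset_iff]
    change h.homMap w m _ = 0
    rw [homMap_classOf, classOf_eq_zero_iff, ← h.boundary_new w m hc hα]
    exact ⟨_, rfl⟩

/-- The coefficient of `α`, as a functional on `C_{m+1}(L', w)` modulo boundaries.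
It is well defined since `α` is not a proper face of any simplex of `L'`. -/
noncomputable def coeffQ (h : IsAttach L L' α) (w : Finset V → R) (m : ℕ)
    (hc : α.card = m + 2) (hα : w α ≠ 0) :
    (WChain L' w (m + 1) ⧸ bdries L' w (m + 1)) →ₗ[R] R :=
  Submodule.liftQ _ (Finsupp.lapply (h.newIdx w m hc hα)) (by
    rintro _ ⟨x, rfl⟩
    obtain ⟨y, rfl⟩ := h.incl_surjective w (m + 2) (by omega) x
    rw [LinearMap.mem_ker, boundary_incl]
    exact h.incl_apply_newIdx w m hc hα _)

/-- The coefficient of `α` as a functional on `H_{m+1}(L', w)`. -/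
noncomputable def coeff (h : IsAttach L L' α) (w : Finset V → R) (m : ℕ)
    (hc : α.card = m + 2) (hα : w α ≠ 0) : wHomology L' w (m + 1) →ₗ[R] R :=
  (h.coeffQ w m hc hα).comp (wHomologyS L' w (m + 1)).subtype

lemma coeff_classOf (h : IsAttach L L' α) (w : Finset V → R) (m : ℕ)
    (hc : α.card = m + 2) (hα : w α ≠ 0) (z : WChain L' w (m + 1))
    (hz : z ∈ cycles L' w (m + 1)) :
    h.coeff w m hc hα (classOf L' w (m + 1) z hz) = z (h.newIdx w m hc hα) := rfl

/-- Exactness of `H_{m+1}(L) → H_{m+1}(L') → R`. -/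
lemma exact_coeff (h : IsAttach L L' α) (w : Finset V → R) (m : ℕ)
    (hc : α.card = m + 2) (hα : w α ≠ 0) :
    Function.Exact (h.homMap w (m + 1)) (h.coeff w m hc hα) := by
  intro u
  constructor
  · intro hu
    obtain ⟨z, hz, rfl⟩ := exists_classOf L' w (m + 1) u
    rw [coeff_classOf] at hu
    obtain ⟨y, hy⟩ := h.exists_decomp w m hc hα z
    rw [hu, zero_smul, add_zero] at hy
    subst hy
    exact ⟨classOf L w (m + 1) y ((h.incl_mem_cycles_iff w _ y).1 hz), rfl⟩
  · rintro ⟨v, rfl⟩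
    obtain ⟨z, hz, rfl⟩ := exists_classOf L w (m + 1) v
    rw [homMap_classOf, coeff_classOf, incl_apply_newIdx]

/-- The possible coefficients of `α` in a cycle of `L'` are the annihilators of `[∂^w α]`. -/
lemma mem_range_coeff_iff (h : IsAttach L L' α) (w : Finset V → R) (m : ℕ)
    (hc : α.card = m + 2) (hα : w α ≠ 0) (hcyc : bdElem L w m α ∈ cycles L w m) (r : R) :
    r ∈ LinearMap.range (h.coeff w m hc hα)
      ↔ r • classOf L w m (bdElem L w m α) hcyc = 0 := by
  rw [smul_classOf, classOf_eq_zero_iff]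
  constructor
  · rintro ⟨u, rfl⟩
    obtain ⟨z, hz, rfl⟩ := exists_classOf L' w (m + 1) u
    rw [coeff_classOf]
    obtain ⟨y, hy⟩ := h.exists_decomp w m hc hα z
    have hz' : wBoundary L' w m z = 0 := hz
    rw [hy, boundary_decomp, map_eq_zero_iff _ (h.incl_injective w m)] at hz'
    exact ⟨-y, by rw [map_neg]; exact (eq_neg_of_add_eq_zero_right hz').symm⟩
  · rintro ⟨y, hy⟩
    refine ⟨classOf L' w (m + 1)
      (h.incl w (m + 1) (-y) + r • Finsupp.single (h.newIdx w m hc hα) 1) ?_, ?_⟩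
    · change wBoundary L' w m _ = 0
      rw [boundary_decomp, map_neg, hy, neg_add_cancel, map_zero]
    · rw [coeff_classOf, Finsupp.add_apply, incl_apply_newIdx]
      simp

end IsAttach

/-- Over a PID, the image of a nonzero functional is a free ideal of rank one, so the
sequence `M → N → R` splits. -/
lemma exists_equiv_prod_of_exact {M N : Type*} [IsPrincipalIdealRing R]
    [AddCommGroup M] [Module R M] [AddCommGroup N] [Module R N]
    (i : M →ₗ[R] N) (p : N →ₗ[R] R) (hi : Function.Injective i) (hex : Function.Exact i p)
    (hp : LinearMap.range p ≠ ⊥) : Nonempty (N ≃ₗ[R] (M × R)) := by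
  obtain ⟨d, hd⟩ := (IsPrincipalIdealRing.principal (LinearMap.range p)).principal
  have hd0 : d ≠ 0 := by
    rintro rfl
    exact hp (by simpa using hd)
  let e : LinearMap.range p ≃ₗ[R] R :=
    (LinearEquiv.ofEq _ _ hd).trans (LinearEquiv.toSpanNonzeroSingleton R R d hd0).symm
  let q : N →ₗ[R] R := e.toLinearMap.comp p.rangeRestrict
  have hq : Function.Surjective q := e.surjective.comp p.surjective_rangeRestrict
  have hex' : Function.Exact i q := by
    intro u
    rw [← hex u]
    change e (p.rangeRestrict u) = 0 ↔ _
    rw [map_eq_zero_iff _ e.injective, ← Submodule.coe_eq_zero]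
    rfl
  obtain ⟨s, hs⟩ := Module.projective_lifting_property q LinearMap.id hq
  exact ⟨(hex'.splitSurjectiveEquiv hi ⟨s, hs⟩).1⟩

/-! ### The level subcomplexes -/

/-- A coface of any codimension can be replaced by one of codimension one without
increasing `f`: a simplex has at most one facet of no smaller `f`-value, whereas at least
two of its facets contain a given face of codimension at least two. -/
lemma exists_facet_le {K : FinSC V} {f : Finset V → ℝ} (hf : IsDiscreteMorse K f)
    {α : Finset V} (hα : α ∈ K.faces) :
    ∀ (d : ℕ) (β : Finset V), β ∈ K.faces → α ⊆ β → β.card = α.card + 1 + d →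
      ∃ β' ∈ K.faces, α ⊂ β' ∧ β'.card = α.card + 1 ∧ f β' ≤ f β := by
  intro d
  induction d with
  | zero =>
    intro β hβ hsub hcard
    exact ⟨β, hβ, Finset.ssubset_iff_subset_ne.2 ⟨hsub, by rintro rfl; omega⟩, hcard, le_rfl⟩
  | succ d ih =>
    intro β hβ hsub hcard
    have hdiff : 1 < (β \ α).card := by
      rw [Finset.card_sdiff_of_subset hsub]
      omega
    obtain ⟨u, hu, v, hv, huv⟩ := Finset.one_lt_card.1 hdiff
    rw [Finset.mem_sdiff] at hu hv
    have hne : α.Nonempty := by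
      rw [Finset.nonempty_iff_ne_empty]
      rintro rfl
      exact K.not_empty_mem hα
    have key : ∀ x ∈ β, x ∉ α → α ⊆ β.erase x ∧ β.erase x ∈ K.faces ∧
        (β.erase x).card + 1 = β.card ∧ β.erase x ⊂ β := by
      intro x hx hxα
      have h1 : α ⊆ β.erase x := Finset.subset_erase.2 ⟨hsub, hxα⟩
      exact ⟨h1, K.down_closed β hβ _ (Finset.erase_subset _ _) (hne.mono h1),
        Finset.card_erase_add_one hx, Finset.erase_ssubset hx⟩
    obtain ⟨u1, u2, u3, u4⟩ := key u hu.1 hu.2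
    obtain ⟨v1, v2, v3, v4⟩ := key v hv.1 hv.2
    have hlt : f (β.erase u) < f β ∨ f (β.erase v) < f β := by
      by_contra! hcon
      have := (hf β hβ).2 ⟨u2, u4, u3, hcon.1⟩ ⟨v2, v4, v3, hcon.2⟩
      have hmem : u ∈ β.erase v := Finset.mem_erase.2 ⟨huv, hu.1⟩
      rw [← this] at hmem
      exact Finset.notMem_erase u β hmem
    rcases hlt with hlt | hlt
    · obtain ⟨β', h1, h2, h3, h4⟩ := ih _ u2 u1 (by omega)
      exact ⟨β', h1, h2, h3, h4.trans hlt.le⟩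
    · obtain ⟨β', h1, h2, h3, h4⟩ := ih _ v2 v1 (by omega)
      exact ⟨β', h1, h2, h3, h4.trans hlt.le⟩

lemma mem_levelSub {K : FinSC V} {f : Finset V → ℝ} {c : ℝ} {σ : Finset V} :
    σ ∈ (levelSub K f c).faces ↔ σ ∈ K.faces ∧ ∃ β ∈ K.faces, σ ⊆ β ∧ f β ≤ c := by
  simp [levelSub]

/-- Crossing a critical value attained only by `α` attaches the single simplex `α`. -/
lemma isAttach_levelSub {K : FinSC V} {f : Finset V → ℝ} (hf : IsDiscreteMorse K f)
    {α : Finset V} (hα : α ∈ K.faces) (hcrit : IsCritical K f α) {c : ℝ} (hc : c < f α)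
    (honly : ∀ σ ∈ K.faces, f σ ∈ Set.Ioc c (f α) → σ = α) :
    IsAttach (levelSub K f c) (levelSub K f (f α)) α := by
  refine ⟨fun σ => ?_, fun hmem => ?_⟩
  · rw [mem_levelSub, mem_levelSub]
    constructor
    · rintro ⟨hσ, β, hβ, hσβ, hfβ⟩
      by_cases hβc : f β ≤ c
      · exact Or.inr ⟨hσ, β, hβ, hσβ, hβc⟩
      · obtain rfl := honly β hβ ⟨not_le.1 hβc, hfβ⟩
        by_cases heq : σ = β
        · exact Or.inl heq
        -- Here `β` is the critical simplex, and its proper face `σ` lies in a facet, which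
        -- has smaller value.
        · obtain ⟨x, hx, hxσ⟩ :=
            Finset.exists_of_ssubset (Finset.ssubset_iff_subset_ne.2 ⟨hσβ, heq⟩)
          have hsub : σ ⊆ β.erase x := Finset.subset_erase.2 ⟨hσβ, hxσ⟩
          have hne : σ.Nonempty := by
            rw [Finset.nonempty_iff_ne_empty]
            rintro rfl
            exact K.not_empty_mem hσ
          have hγ : β.erase x ∈ K.faces :=
            K.down_closed β hβ _ (Finset.erase_subset _ _) (hne.mono hsub)
          have hlt := not_le.1 (hcrit.2 _ hγ (Finset.erase_ssubset hx)
            (Finset.card_erase_add_one hx))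
          refine Or.inr ⟨hσ, _, hγ, hsub, ?_⟩
          by_contra hcon
          have := honly _ hγ ⟨not_le.1 hcon, hlt.le⟩
          exact Finset.notMem_erase x β (this.symm ▸ hx)
    · rintro (rfl | ⟨hσ, β, hβ, hσβ, hfβ⟩)
      · exact ⟨hα, σ, hα, subset_rfl, le_rfl⟩
      · exact ⟨hσ, β, hβ, hσβ, hfβ.trans hc.le⟩
  · obtain ⟨_, β, hβ, hαβ, hfβ⟩ := mem_levelSub.1 hmem
    have hne : α ≠ β := by
      rintro rfl
      exact absurd hc (not_lt.2 hfβ)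
    have hcard := Finset.card_lt_card (Finset.ssubset_iff_subset_ne.2 ⟨hαβ, hne⟩)
    obtain ⟨β', h1, h2, h3, h4⟩ :=
      exists_facet_le hf hα (β.card - (α.card + 1)) β hβ hαβ (by omega)
    exact hcrit.1 β' h1 h2 h3 (h4.trans (hfβ.trans hc.le))

/-- the final Corollary of Section 4.  Let `R` be a PID and `(K,w)`
a weighted simplicial complex over `R` with a discrete Morse function `f`.  Suppose
`α^{(n)}` (`n ≥ 1`) is a critical simplex with `f α ∈ (a,b]`, `f⁻¹((a,b])` contains no
other critical simplices, `a' = min { x ∈ [a, f α) : f⁻¹((x, f α]) = {α} }`, every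
simplex in `f⁻¹((a,a']) ∪ f⁻¹((f α, b])` is `w`-simple, and `w α ≠ 0`.  Then:
(1) `H_k(K(a'),w) ≅ H_k(K(f α)),w)` for `k ∉ {n-1, n}`;
(2) `H_{n-1}(K(f α),w) ≅ H_{n-1}(K(a'),w) / { r • [∂^w α] : r ∈ R }` (expressed by a
surjective linear map with kernel `span R {[∂^w α]}`); and
(3) `H_n(K(f α),w) ≅ H_n(K(a'),w) ⊕ R` if `[∂^w α]` is a torsion element, and
`H_n(K(f α),w) ≅ H_n(K(a'),w)` otherwise. -/
theorem levelSub_critical_removal_wHomology [IsPrincipalIdealRing R]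
    (K : FinSC V) (w : Finset V → R) (hw : IsWeight K w)
    (f : Finset V → ℝ) (hf : IsDiscreteMorse K f)
    (a b : ℝ) (n : ℕ) (hn : 1 ≤ n) (α : Finset V)
    (hα : α ∈ K.faces) (hαc : α.card = n + 1)
    (hcrit : IsCritical K f α) (hfα : f α ∈ Set.Ioc a b)
    (honly : ∀ σ ∈ K.faces, f σ ∈ Set.Ioc a b → IsCritical K f σ → σ = α)
    (a' : ℝ)
    (ha' : IsLeast {x : ℝ | x ∈ Set.Ico a (f α) ∧
      ∀ σ ∈ K.faces, f σ ∈ Set.Ioc x (f α) → σ = α} a')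
    (hws : ∀ σ ∈ K.faces,
      (f σ ∈ Set.Ioc a a' ∨ f σ ∈ Set.Ioc (f α) b) → IsWSimple K w f σ)
    (hwα : w α ≠ 0)
    (hcyc : bdElem (levelSub K f a') w (n - 1) α ∈ cycles (levelSub K f a') w (n - 1)) :
    (∀ k : ℕ, k ≠ n - 1 → k ≠ n →
      Nonempty (wHomology (levelSub K f a') w k ≃ₗ[R]
        wHomology (levelSub K f (f α)) w k)) ∧
    (∃ g : wHomology (levelSub K f a') w (n - 1) →ₗ[R]
        wHomology (levelSub K f (f α)) w (n - 1),
      Function.Surjective g ∧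
      LinearMap.ker g = Submodule.span R
        {classOf (levelSub K f a') w (n - 1)
          (bdElem (levelSub K f a') w (n - 1) α) hcyc}) ∧
    ((∃ r : R, r ≠ 0 ∧ r • classOf (levelSub K f a') w (n - 1)
          (bdElem (levelSub K f a') w (n - 1) α) hcyc = 0) →
      Nonempty (wHomology (levelSub K f (f α)) w n ≃ₗ[R]
        (wHomology (levelSub K f a') w n × R))) ∧
    (¬ (∃ r : R, r ≠ 0 ∧ r • classOf (levelSub K f a') w (n - 1)
          (bdElem (levelSub K f a') w (n - 1) α) hcyc = 0) →
      Nonempty (wHomology (levelSub K f (f α)) w n ≃ₗ[R]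
        wHomology (levelSub K f a') w n)) := by
  obtain ⟨m, rfl⟩ : ∃ m, n = m + 1 := ⟨n - 1, by omega⟩
  have h : IsAttach (levelSub K f a') (levelSub K f (f α)) α :=
    isAttach_levelSub hf hα hcrit ha'.1.1.2 ha'.1.2
  have hinj : Function.Injective (h.homMap w (m + 1)) :=
    h.homMap_injective w (m + 1) (by omega)
  have hmem := h.mem_range_coeff_iff w m hαc hwα hcyc
  refine ⟨fun k hk1 hk2 => ?_, ?_, ?_, ?_⟩
  · exact ⟨LinearEquiv.ofBijective (h.homMap w k)
      ⟨h.homMap_injective w k (by omega), h.homMap_surjective w k (by omega)⟩⟩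
  · exact ⟨h.homMap w m, h.homMap_surjective w m (by omega),
      h.ker_homMap w m hαc hwα hcyc⟩
  · rintro ⟨r, hr0, hr⟩
    refine exists_equiv_prod_of_exact (h.homMap w (m + 1)) (h.coeff w m hαc hwα) hinj
      (h.exact_coeff w m hαc hwα) fun hbot => hr0 ?_
    have := (hmem r).2 hr
    rwa [hbot, Submodule.mem_bot] at this
  · intro hnt
    refine ⟨(LinearEquiv.ofBijective (h.homMap w (m + 1)) ⟨hinj, fun u => ?_⟩).symm⟩
    refine (h.exact_coeff w m hαc hwα u).1 ?_
    by_contra hne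
    exact hnt ⟨_, hne, (hmem _).1 ⟨u, rfl⟩⟩

end FinSC
end

section
/- Let x and y be distinct letters of an alphabet and let S be the sequence xyyy. Let K = Δ(P_S) be the order complex of the poset P_S of proper substrings of S (the substrings x, y, xy, yy, xyy, yyy ordered by the substring relation). Assign weights w(x) = a and w(y) = b with a, b positive integers, extend to substrings multiplicatively (w(x_1…x_n) = ∏ w(x_i)), and extend to simplices of K by taking the LCM of the weights of their vertices (Type 3 weighted ordered complex, over R = ℤ). Then H_0(K, w) ≅ ℤ ⊕ ℤ/gcd(a,b)ℤ, and H_i(K, w) ≅ 0 for all i ≥ 1. -/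
/-! ### Weighted boundaries of edges and triangles -/

namespace FinSC

variable {V : Type*} [LinearOrder V]

lemma divR_eq {a b c : ℤ} (hb : b ≠ 0) (h : a = b * c) : divR a b = c := by
  have hd : b ∣ a := ⟨c, h⟩
  unfold divR
  rw [dif_pos hd]
  exact mul_left_cancel₀ hb (hd.choose_spec.symm.trans h)

open scoped Classical in
/-- The basis chain of the simplex `σ`, or `0` when `σ` does not index a generator of `C_n(K, w)`.
Totality in `σ` keeps membership proofs out of the boundary formulas. -/
noncomputable def basisChain (K : FinSC V) (w : Finset V → ℤ) (n : ℕ) (σ : Finset V) :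
    WChain K w n :=
  if h : σ ∈ K.faces ∧ σ.card = n + 1 ∧ w σ ≠ 0 then Finsupp.single ⟨σ, h⟩ 1 else 0

lemma bdElem_eq_sum (K : FinSC V) (w : Finset V → ℤ) (n : ℕ) (σ : Finset V) :
    bdElem K w n σ = ∑ i ∈ Finset.range (n + 2),
      ((-1 : ℤ) ^ i * divR (w σ) (w (dFace σ i))) • basisChain K w n (dFace σ i) := by
  unfold bdElem basisChain
  refine Finset.sum_congr rfl fun i _ => ?_
  split_ifs <;> simp

lemma wBoundary_basisChain (K : FinSC V) (w : Finset V → ℤ) (n : ℕ) (σ : Finset V)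
    (h : σ ∈ K.faces ∧ σ.card = n + 1 + 1 ∧ w σ ≠ 0) :
    wBoundary K w n (basisChain K w (n + 1) σ) = bdElem K w n σ := by
  unfold wBoundary basisChain
  rw [dif_pos h, Finsupp.linearCombination_single, one_smul]

lemma sort_pair {u v : V} (h : u < v) : ({u, v} : Finset V).sort (· ≤ ·) = [u, v] := by
  rw [Finset.sort_insert] <;> simp [h.le, h.ne]

lemma sort_triple {u v t : V} (h : u < v) (h' : v < t) :
    ({u, v, t} : Finset V).sort (· ≤ ·) = [u, v, t] := by
  rw [Finset.sort_insert, sort_pair h']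
  · simp [h.le, (h.trans h').le]
  · simp [h.ne, (h.trans h').ne]

/-- The arbitrary `DecidableEq` instance matters for `V = List A`, where the one found by inference
is not the one of the linear order. -/
lemma bdElem_pair [D : DecidableEq V] (K : FinSC V) (w : Finset V → ℤ) {u v : V} (h : u < v) :
    bdElem K w 0 {u, v} = divR (w {u, v}) (w {v}) • basisChain K w 0 {v}
      - divR (w {u, v}) (w {u}) • basisChain K w 0 {u} := by
  obtain rfl : D = LinearOrder.toDecidableEq := Subsingleton.elim _ _
  have h0 : dFace ({u, v} : Finset V) 0 = {v} := by
    simp only [dFace, sort_pair h]; ext; simp; grind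
  have h1 : dFace ({u, v} : Finset V) 1 = {u} := by
    simp only [dFace, sort_pair h]; ext; simp; grind
  simp [bdElem_eq_sum, Finset.sum_range_succ, h0, h1, sub_eq_add_neg]

lemma bdElem_triple [D : DecidableEq V] (K : FinSC V) (w : Finset V → ℤ) {u v t : V}
    (h : u < v) (h' : v < t) :
    bdElem K w 1 {u, v, t} = divR (w {u, v, t}) (w {v, t}) • basisChain K w 1 {v, t}
      - divR (w {u, v, t}) (w {u, t}) • basisChain K w 1 {u, t}
      + divR (w {u, v, t}) (w {u, v}) • basisChain K w 1 {u, v} := by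
  obtain rfl : D = LinearOrder.toDecidableEq := Subsingleton.elim _ _
  have h2 := h.trans h'
  have e0 : dFace ({u, v, t} : Finset V) 0 = {v, t} := by
    simp only [dFace, sort_triple h h']; ext; simp; grind
  have e1 : dFace ({u, v, t} : Finset V) 1 = {u, t} := by
    simp only [dFace, sort_triple h h']; ext; simp; grind
  have e2 : dFace ({u, v, t} : Finset V) 2 = {u, v} := by
    simp only [dFace, sort_triple h h']; ext; simp; grind
  simp [bdElem_eq_sum, Finset.sum_range_succ, e0, e1, e2, sub_eq_add_neg]

end FinSC

/-! ### The order complex of `xyyy` -/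

namespace XYYY

open FinSC

/-- The six proper substrings of `xyyy`, in the order `x, xy, xyy, y, yy, yyy`. -/
def vtx {A : Type*} (x y : A) : Fin 6 → List A :=
  ![[x], [x, y], [x, y, y], [y], [y, y], [y, y, y]]

/-- The table of the substring order on the indices of `vtx`. -/
def le : Fin 6 → Fin 6 → Bool :=
  ![![true, true, true, false, false, false],
    ![false, true, true, false, false, false],
    ![false, false, true, false, false, false],
    ![false, true, true, true, true, true],
    ![false, false, true, false, true, true],
    ![false, false, false, false, false, true]]

/-- The index set `s` gives a chain of substrings. -/
def IsChainIdx (s : Finset (Fin 6)) : Prop := ∀ i ∈ s, ∀ j ∈ s, le i j = true ∨ le j i = true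

instance (s : Finset (Fin 6)) : Decidable (IsChainIdx s) := by unfold IsChainIdx; infer_instance

/-- The weights of the six substrings, where `x` has weight `a` and `y` has weight `b`. -/
def vwt (a b : ℤ) : Fin 6 → ℤ := ![a, a * b, a * b ^ 2, b, b ^ 2, b ^ 3]

lemma vwt_pos {a b : ℤ} (ha : 0 < a) (hb : 0 < b) (i : Fin 6) : 0 < vwt a b i := by
  fin_cases i <;> simp [vwt] <;> positivity

lemma vwt_dvd {a b : ℤ} {i j : Fin 6} (h : le i j = true) : vwt a b i ∣ vwt a b j := by
  revert h
  fin_cases i <;> fin_cases j <;> simp [vwt, le] <;>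
    first
    | exact ⟨b, by ring1⟩
    | exact ⟨b ^ 2, by ring1⟩
    | exact ⟨a * b, by ring1⟩

lemma vtx_injective {A : Type*} {x y : A} (hxy : x ≠ y) : Function.Injective (vtx x y) := by
  intro i j
  fin_cases i <;> fin_cases j <;> simp [vtx, hxy, hxy.symm]

lemma infix_iff {A : Type*} {x y : A} (hxy : x ≠ y) (i j : Fin 6) :
    vtx x y i <:+: vtx x y j ↔ le i j = true := by
  fin_cases i <;> fin_cases j <;>
    simp [vtx, le, List.infix_cons_iff, hxy, hxy.symm]

variable {A : Type*} [LinearOrder A]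

lemma properSubstr_xyyy (x y : A) :
    properSubstr [x, y, y, y] = Finset.univ.image (vtx x y) := by
  ext T
  simp only [properSubstr, vtx, Finset.mem_filter, List.mem_toFinset, Finset.mem_image,
    Finset.mem_univ, true_and, Fin.exists_fin_succ]
  simp
  grind

lemma mem_faces_image {x y : A} (hxy : x ≠ y) (s : Finset (Fin 6)) :
    s.image (vtx x y) ∈ (orderComplex [x, y, y, y]).faces ↔ s.Nonempty ∧ IsChainIdx s := by
  simp only [orderComplex, Finset.mem_filter, Finset.mem_powerset, properSubstr_xyyy,
    Finset.image_nonempty, Finset.forall_mem_image, infix_iff hxy, IsChainIdx]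
  exact ⟨fun h => h.2, fun h => ⟨Finset.image_subset_image (Finset.subset_univ _), h⟩⟩

lemma exists_of_mem_faces {x y : A} (hxy : x ≠ y) {σ : Finset (List A)}
    (h : σ ∈ (orderComplex [x, y, y, y]).faces) :
    ∃ s, IsChainIdx s ∧ σ = s.image (vtx x y) ∧ s.card = σ.card := by
  have h' : σ ⊆ Finset.univ.image (vtx x y) := by
    rw [← properSubstr_xyyy]
    simp only [orderComplex, Finset.mem_filter, Finset.mem_powerset] at h
    exact h.1
  obtain ⟨s, -, rfl⟩ := Finset.subset_image_iff.1 h'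
  exact ⟨s, ((mem_faces_image hxy s).1 h).2, rfl,
    (Finset.card_image_of_injective _ (vtx_injective hxy)).symm⟩

/-- The index sets of the vertices, edges, triangles of the order complex (none in dimension at
least three). -/
def simplices : ℕ → Finset (Finset (Fin 6))
  | 0 => {{0}, {1}, {2}, {3}, {4}, {5}}
  | 1 => {{0, 1}, {0, 2}, {1, 2}, {1, 3}, {2, 3}, {2, 4}, {3, 4}, {3, 5}, {4, 5}}
  | 2 => {{0, 1, 2}, {1, 2, 3}, {2, 3, 4}, {3, 4, 5}}
  | _ + 3 => ∅

lemma mem_simplices_iff (n : ℕ) (s : Finset (Fin 6)) :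
    s ∈ simplices n ↔ IsChainIdx s ∧ s.card = n + 1 := by
  match n with
  | 0 => revert s; decide
  | 1 => revert s; decide
  | 2 => revert s; decide
  | m + 3 =>
    have h : ∀ s : Finset (Fin 6), IsChainIdx s → s.card ≤ 3 := by decide
    constructor
    · simp [simplices]
    · rintro ⟨h1, h2⟩
      have := h s h1
      omega

/-- The Type 3 weight: the LCM of the multiplicative weights of the vertices. -/
def wt (x : A) (a b : ℤ) : Finset (List A) → ℤ :=
  fun σ => σ.lcm (fun T => (T.map (fun c => if c = x then a else b)).prod)

/-- The vertex indexed by `t` is the largest one of the simplex indexed by `s`. -/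
def IsTop (s : Finset (Fin 6)) (t : Fin 6) : Prop := t ∈ s ∧ ∀ i ∈ s, le i t = true

instance (s : Finset (Fin 6)) (t : Fin 6) : Decidable (IsTop s t) := by
  unfold IsTop; infer_instance

lemma wt_ne_zero (x y : A) {a b : ℤ} (ha : 0 < a) (hb : 0 < b) (s : Finset (Fin 6)) :
    wt x a b (s.image (vtx x y)) ≠ 0 := by
  rw [wt, Ne, Finset.lcm_eq_zero_iff]
  rintro ⟨T, -, hT⟩
  simp only [List.prod_eq_zero_iff, List.mem_map] at hT
  obtain ⟨c, -, hc⟩ := hT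
  split_ifs at hc <;> omega

section
variable {x y : A} (hxy : x ≠ y) {a b : ℤ} (ha : 0 < a) (hb : 0 < b)
include hxy ha hb

/-- Weights of substrings divide each other along the substring order, so the LCM over a chain is
the weight of its largest element. -/
lemma wt_of_isTop {s : Finset (Fin 6)} {t : Fin 6} (h : IsTop s t) :
    wt x a b (s.image (vtx x y)) = vwt a b t := by
  have hf : ∀ i, ((vtx x y i).map (fun c => if c = x then a else b)).prod = vwt a b i := by
    intro i
    fin_cases i <;> simp [vtx, vwt, hxy.symm, pow_succ, mul_assoc]
  apply Int.dvd_antisymm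
  · rw [wt, ← Finset.normalize_lcm]
    exact Int.nonneg_of_normalize_eq_self (by simp)
  · exact (vwt_pos ha hb t).le
  · refine Finset.lcm_dvd fun T hT => ?_
    obtain ⟨i, hi, rfl⟩ := Finset.mem_image.1 hT
    rw [hf]
    exact vwt_dvd (h.2 i hi)
  · rw [← hf]
    exact Finset.dvd_lcm (Finset.mem_image_of_mem _ h.1)

lemma isGenerator {n : ℕ} {s : Finset (Fin 6)} (hs : s ∈ simplices n) :
    s.image (vtx x y) ∈ (orderComplex [x, y, y, y]).faces ∧
      (s.image (vtx x y)).card = n + 1 ∧ wt x a b (s.image (vtx x y)) ≠ 0 := by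
  obtain ⟨h1, h2⟩ := (mem_simplices_iff n s).1 hs
  exact ⟨(mem_faces_image hxy s).2 ⟨Finset.card_pos.1 (by omega), h1⟩,
    by rw [Finset.card_image_of_injective _ (vtx_injective hxy), h2], wt_ne_zero x y ha hb s⟩
end

/-! ### Coordinates on the chain groups -/

/-- The basis chain of the simplex with vertex index set `s`. -/
noncomputable def B (x y : A) (a b : ℤ) (n : ℕ) (s : Finset (Fin 6)) :
    WChain (orderComplex [x, y, y, y]) (wt x a b) n :=
  basisChain _ _ n (s.image (vtx x y))

open scoped Classical in
/-- The coordinate of a chain at the simplex with vertex index set `s` (zero if there is none). -/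
noncomputable def coord (x y : A) (a b : ℤ) (n : ℕ) (s : Finset (Fin 6)) :
    WChain (orderComplex [x, y, y, y]) (wt x a b) n →ₗ[ℤ] ℤ :=
  if h : s.image (vtx x y) ∈ (orderComplex [x, y, y, y]).faces ∧
      (s.image (vtx x y)).card = n + 1 ∧ wt x a b (s.image (vtx x y)) ≠ 0 then
    Finsupp.lapply ⟨s.image (vtx x y), h⟩ else 0

lemma exists_eq_sum {x y : A} (hxy : x ≠ y) {a b : ℤ} {n : ℕ}
    (z : WChain (orderComplex [x, y, y, y]) (wt x a b) n) :
    ∃ c : Finset (Fin 6) → ℤ, z = ∑ s ∈ simplices n, c s • B x y a b n s := by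
  induction z using Finsupp.induction_linear with
  | zero => exact ⟨0, by simp⟩
  | add f g hf hg =>
    obtain ⟨c, rfl⟩ := hf
    obtain ⟨d, rfl⟩ := hg
    exact ⟨c + d, by simp [add_smul, Finset.sum_add_distrib]⟩
  | single σ r =>
    obtain ⟨s, h1, h2, h3⟩ := exists_of_mem_faces hxy σ.2.1
    have hs : s ∈ simplices n := (mem_simplices_iff n s).2 ⟨h1, h3.trans σ.2.2.1⟩
    refine ⟨Pi.single s r, ?_⟩
    rw [Finset.sum_eq_single_of_mem s hs (by intro t _ ht; simp [ht])]
    obtain ⟨σ, hσ⟩ := σ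
    subst h2
    simp [B, basisChain, hσ]

section
variable {x y : A} (hxy : x ≠ y) {a b : ℤ} (ha : 0 < a) (hb : 0 < b)
include hxy ha hb

lemma coord_B {n : ℕ} {s t : Finset (Fin 6)} (hs : s ∈ simplices n) (ht : t ∈ simplices n) :
    coord x y a b n s (B x y a b n t) = if s = t then 1 else 0 := by
  have hs' := isGenerator hxy ha hb hs
  have ht' := isGenerator hxy ha hb ht
  rw [coord, dif_pos hs', B, basisChain, dif_pos ht', Finsupp.lapply_apply, Finsupp.single_apply]
  congr 1
  rw [Subtype.mk.injEq, Finset.image_inj (vtx_injective hxy)]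
  exact propext eq_comm

lemma boundary_edge {i j : Fin 6} (t : Fin 6) (hij : vtx x y i < vtx x y j)
    (hs : {i, j} ∈ simplices 1) (ht : IsTop {i, j} t) (ci cj : ℤ)
    (hi : vwt a b t = vwt a b i * ci) (hj : vwt a b t = vwt a b j * cj) :
    wBoundary _ _ 0 (B x y a b 1 {i, j}) = cj • B x y a b 0 {j} - ci • B x y a b 0 {i} := by
  have key := wt_of_isTop hxy ha hb ht
  have htop : ∀ k : Fin 6, IsTop {k} k := by decide
  have ki := wt_of_isTop hxy ha hb (htop i)
  have kj := wt_of_isTop hxy ha hb (htop j)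
  rw [B, wBoundary_basisChain _ _ _ _ (isGenerator hxy ha hb hs)]
  simp only [B, Finset.image_insert, Finset.image_singleton] at key ki kj ⊢
  rw [bdElem_pair _ _ hij, key, ki, kj, divR_eq (vwt_pos ha hb i).ne' hi,
    divR_eq (vwt_pos ha hb j).ne' hj]

lemma boundary_triangle {i j k : Fin 6} (t ti tj tk : Fin 6) (hij : vtx x y i < vtx x y j)
    (hjk : vtx x y j < vtx x y k) (hs : {i, j, k} ∈ simplices 2) (ht : IsTop {i, j, k} t)
    (hti : IsTop {j, k} ti) (htj : IsTop {i, k} tj) (htk : IsTop {i, j} tk) (ci cj ck : ℤ)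
    (hi : vwt a b t = vwt a b ti * ci) (hj : vwt a b t = vwt a b tj * cj)
    (hk : vwt a b t = vwt a b tk * ck) :
    wBoundary _ _ 1 (B x y a b 2 {i, j, k}) =
      ci • B x y a b 1 {j, k} - cj • B x y a b 1 {i, k} + ck • B x y a b 1 {i, j} := by
  have key := wt_of_isTop hxy ha hb ht
  have ki := wt_of_isTop hxy ha hb hti
  have kj := wt_of_isTop hxy ha hb htj
  have kk := wt_of_isTop hxy ha hb htk
  rw [B, wBoundary_basisChain _ _ _ _ (isGenerator hxy ha hb hs)]
  simp only [B, Finset.image_insert, Finset.image_singleton] at key ki kj kk ⊢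
  rw [bdElem_triple _ _ hij hjk, key, ki, kj, kk, divR_eq (vwt_pos ha hb ti).ne' hi,
    divR_eq (vwt_pos ha hb tj).ne' hj, divR_eq (vwt_pos ha hb tk).ne' hk]

end

/-- All boundaries, in coordinates.  The two orders of the letters `x` and `y` give the same
formulas up to the sign `e` of the edges joining one of `x, xy, xyy` to one of `y, yy, yyy`. -/
lemma boundary_formulas {x y : A} (hxy : x ≠ y) {a b : ℤ} (ha : 0 < a) (hb : 0 < b) :
    ∃ e : ℤ, e * e = 1 ∧
    (wBoundary _ _ 0 (B x y a b 1 {0, 1}) = B x y a b 0 {1} - b • B x y a b 0 {0} ∧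
    wBoundary _ _ 0 (B x y a b 1 {0, 2}) = B x y a b 0 {2} - b ^ 2 • B x y a b 0 {0} ∧
    wBoundary _ _ 0 (B x y a b 1 {1, 2}) = B x y a b 0 {2} - b • B x y a b 0 {1} ∧
    wBoundary _ _ 0 (B x y a b 1 {1, 3}) = e • (a • B x y a b 0 {3} - B x y a b 0 {1}) ∧
    wBoundary _ _ 0 (B x y a b 1 {2, 3}) = e • ((a * b) • B x y a b 0 {3} - B x y a b 0 {2}) ∧
    wBoundary _ _ 0 (B x y a b 1 {2, 4}) = e • (a • B x y a b 0 {4} - B x y a b 0 {2}) ∧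
    wBoundary _ _ 0 (B x y a b 1 {3, 4}) = B x y a b 0 {4} - b • B x y a b 0 {3} ∧
    wBoundary _ _ 0 (B x y a b 1 {3, 5}) = B x y a b 0 {5} - b ^ 2 • B x y a b 0 {3} ∧
    wBoundary _ _ 0 (B x y a b 1 {4, 5}) = B x y a b 0 {5} - b • B x y a b 0 {4}) ∧
    (wBoundary _ _ 1 (B x y a b 2 {0, 1, 2}) =
      B x y a b 1 {1, 2} - B x y a b 1 {0, 2} + b • B x y a b 1 {0, 1} ∧
    wBoundary _ _ 1 (B x y a b 2 {1, 2, 3}) =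
      B x y a b 1 {1, 2} + e • B x y a b 1 {2, 3} - (e * b) • B x y a b 1 {1, 3} ∧
    wBoundary _ _ 1 (B x y a b 2 {2, 3, 4}) =
      a • B x y a b 1 {3, 4} - e • B x y a b 1 {2, 4} + e • B x y a b 1 {2, 3} ∧
    wBoundary _ _ 1 (B x y a b 2 {3, 4, 5}) =
      B x y a b 1 {4, 5} - B x y a b 1 {3, 5} + b • B x y a b 1 {3, 4}) := by
  have e01 := boundary_edge hxy ha hb (i := 0) (j := 1) 1 (by simp [vtx]) (by decide) (by decide)
    b 1 (by simp [vwt]) (by simp)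
  have e02 := boundary_edge hxy ha hb (i := 0) (j := 2) 2 (by simp [vtx]) (by decide) (by decide)
    (b ^ 2) 1 (by simp [vwt]) (by simp)
  have e12 := boundary_edge hxy ha hb (i := 1) (j := 2) 2 (by simp [vtx]) (by decide) (by decide)
    b 1 (by simp [vwt]; ring) (by simp)
  have e34 := boundary_edge hxy ha hb (i := 3) (j := 4) 4 (by simp [vtx]) (by decide) (by decide)
    b 1 (by simp [vwt]; ring) (by simp)
  have e35 := boundary_edge hxy ha hb (i := 3) (j := 5) 5 (by simp [vtx]) (by decide) (by decide)
    (b ^ 2) 1 (by simp [vwt]; ring) (by simp)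
  have e45 := boundary_edge hxy ha hb (i := 4) (j := 5) 5 (by simp [vtx]) (by decide) (by decide)
    b 1 (by simp [vwt]; ring) (by simp)
  have t012 := boundary_triangle hxy ha hb (i := 0) (j := 1) (k := 2) 2 2 2 1 (by simp [vtx])
    (by simp [vtx]) (by decide) (by decide) (by decide) (by decide) (by decide) 1 1 b (by simp) (by simp)
    (by simp [vwt]; ring)
  have t345 := boundary_triangle hxy ha hb (i := 3) (j := 4) (k := 5) 5 5 5 4 (by simp [vtx])
    (by simp [vtx]) (by decide) (by decide) (by decide) (by decide) (by decide) 1 1 b (by simp) (by simp)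
    (by simp [vwt]; ring)
  simp only [one_smul] at e01 e02 e12 e34 e35 e45 t012 t345
  rcases lt_or_gt_of_ne hxy with h | h
  · refine ⟨1, by norm_num, ⟨e01, e02, e12, ?_, ?_, ?_, e34, e35, e45⟩, t012, ?_, ?_, t345⟩
    · rw [boundary_edge hxy ha hb 1 (by simp [vtx, List.cons_lt_cons_iff, h]) (by decide)
        (by decide) 1 a (by simp) (by simp [vwt]; ring)]
      module
    · rw [boundary_edge hxy ha hb 2 (by simp [vtx, List.cons_lt_cons_iff, h]) (by decide)
        (by decide) 1 (a * b) (by simp) (by simp [vwt]; ring)]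
      module
    · rw [boundary_edge hxy ha hb 2 (by simp [vtx, List.cons_lt_cons_iff, h]) (by decide)
        (by decide) 1 a (by simp) (by simp [vwt]; ring)]
      module
    · rw [boundary_triangle hxy ha hb 2 2 1 2 (by simp [vtx]) (by simp [vtx, List.cons_lt_cons_iff, h])
        (by decide) (by decide) (by decide) (by decide) (by decide) 1 b 1 (by simp)
        (by simp [vwt]; ring) (by simp)]
      module
    · rw [boundary_triangle hxy ha hb 2 4 2 2 (by simp [vtx, List.cons_lt_cons_iff, h]) (by simp [vtx])
        (by decide) (by decide) (by decide) (by decide) (by decide) a 1 1 (by simp [vwt]; ring)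
        (by simp) (by simp)]
  · rw [show ({1, 2, 3} : Finset (Fin 6)) = {3, 1, 2} by decide,
      show ({2, 3, 4} : Finset (Fin 6)) = {3, 4, 2} by decide,
      Finset.pair_comm 1 3, Finset.pair_comm 2 3, Finset.pair_comm 2 4]
    refine ⟨-1, by norm_num, ⟨e01, e02, e12, ?_, ?_, ?_, e34, e35, e45⟩, t012, ?_, ?_, t345⟩
    · rw [boundary_edge hxy ha hb 1 (by simp [vtx, List.cons_lt_cons_iff, h]) (by decide)
        (by decide) a 1 (by simp [vwt]; ring) (by simp)]
      module
    · rw [boundary_edge hxy ha hb 2 (by simp [vtx, List.cons_lt_cons_iff, h]) (by decide)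
        (by decide) (a * b) 1 (by simp [vwt]; ring) (by simp)]
      module
    · rw [boundary_edge hxy ha hb 2 (by simp [vtx, List.cons_lt_cons_iff, h]) (by decide)
        (by decide) a 1 (by simp [vwt]; ring) (by simp)]
      module
    · rw [boundary_triangle hxy ha hb 2 2 2 1 (by simp [vtx, List.cons_lt_cons_iff, h]) (by simp [vtx])
        (by decide) (by decide) (by decide) (by decide) (by decide) 1 1 b (by simp) (by simp)
        (by simp [vwt]; ring)]
      module
    · rw [boundary_triangle hxy ha hb 2 2 2 4 (by simp [vtx]) (by simp [vtx, List.cons_lt_cons_iff, h])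
        (by decide) (by decide) (by decide) (by decide) (by decide) 1 1 a (by simp) (by simp)
        (by simp [vwt]; ring)]
      module

/-! ### Homology in positive degrees -/

lemma sum_simplices_zero {M : Type*} [AddCommMonoid M] (f : Finset (Fin 6) → M) :
    ∑ s ∈ simplices 0, f s = f {0} + (f {1} + (f {2} + (f {3} + (f {4} + f {5})))) := by
  simp only [simplices]
  repeat rw [Finset.sum_insert (by decide)]
  rw [Finset.sum_singleton]

lemma sum_simplices_one {M : Type*} [AddCommMonoid M] (f : Finset (Fin 6) → M) :
    ∑ s ∈ simplices 1, f s = f {0, 1} + (f {0, 2} + (f {1, 2} + (f {1, 3} + (f {2, 3} +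
      (f {2, 4} + (f {3, 4} + (f {3, 5} + f {4, 5}))))))) := by
  simp only [simplices]
  repeat rw [Finset.sum_insert (by decide)]
  rw [Finset.sum_singleton]

lemma sum_simplices_two {M : Type*} [AddCommMonoid M] (f : Finset (Fin 6) → M) :
    ∑ s ∈ simplices 2, f s = f {0, 1, 2} + (f {1, 2, 3} + (f {2, 3, 4} + f {3, 4, 5})) := by
  simp only [simplices]
  repeat rw [Finset.sum_insert (by decide)]
  rw [Finset.sum_singleton]

section
variable {x y : A} (hxy : x ≠ y) {a b : ℤ} (ha : 0 < a) (hb : 0 < b)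
include hxy ha hb

lemma coord_B_zero (i j : Fin 6) :
    coord x y a b 0 {i} (B x y a b 0 {j}) = if i = j then 1 else 0 := by
  have h : ∀ k : Fin 6, {k} ∈ simplices 0 := by decide
  rw [coord_B hxy ha hb (h i) (h j)]
  simp

/-- The edges `{0, 2}`, `{2, 4}`, `{3, 5}` each lie in a single triangle, with unit coefficient, so
three coefficients of a cycle vanish; the edge `{1, 2}` then kills the fourth. -/
lemma cycle_two_eq_zero (z : WChain (orderComplex [x, y, y, y]) (wt x a b) 2)
    (hz : wBoundary _ _ 1 z = 0) : z = 0 := by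
  obtain ⟨e, he, -, t1, t2, t3, t4⟩ := boundary_formulas hxy ha hb
  obtain ⟨c, rfl⟩ := exists_eq_sum hxy z
  have he0 : e ≠ 0 := by rintro rfl; simp at he
  rw [sum_simplices_two] at hz ⊢
  simp only [map_add, map_smul, t1, t2, t3, t4] at hz
  have q1 := congrArg (coord x y a b 1 {0, 2}) hz
  have q2 := congrArg (coord x y a b 1 {1, 2}) hz
  have q3 := congrArg (coord x y a b 1 {2, 4}) hz
  have q4 := congrArg (coord x y a b 1 {3, 5}) hz
  simp +decide (disch := decide) only [map_add, map_sub, map_smul, map_zero,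
    coord_B hxy ha hb, if_true, if_false, smul_eq_mul] at q1 q2 q3 q4
  have r1 : c {0, 1, 2} = 0 := by linarith
  have r2 : c {1, 2, 3} = 0 := by linarith
  have r3 : c {2, 3, 4} = 0 := by
    have : c {2, 3, 4} * e = 0 := by linarith
    simpa [he0] using this
  have r4 : c {3, 4, 5} = 0 := by linarith
  simp [r1, r2, r3, r4]

/-- The triangles `{0, 1, 2}`, `{1, 2, 3}`, `{2, 3, 4}`, `{3, 4, 5}` allow removing the edges
`{0, 2}`, `{2, 3}`, `{2, 4}`, `{3, 5}` from a cycle, leaving a cycle on a spanning tree. -/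
lemma cycle_one_mem_range (z : WChain (orderComplex [x, y, y, y]) (wt x a b) 1)
    (hz : wBoundary _ _ 0 z = 0) : z ∈ LinearMap.range (wBoundary _ _ 1) := by
  obtain ⟨e, he, ⟨e1, e2, e3, e4, e5, e6, e7, e8, e9⟩, t1, t2, t3, t4⟩ :=
    boundary_formulas hxy ha hb
  obtain ⟨c, rfl⟩ := exists_eq_sum hxy z
  rw [sum_simplices_one] at hz ⊢
  simp only [map_add, map_smul, e1, e2, e3, e4, e5, e6, e7, e8, e9] at hz
  have q0 := congrArg (coord x y a b 0 {0}) hz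
  have q1 := congrArg (coord x y a b 0 {1}) hz
  have q2 := congrArg (coord x y a b 0 {2}) hz
  have q4 := congrArg (coord x y a b 0 {4}) hz
  have q5 := congrArg (coord x y a b 0 {5}) hz
  simp +decide only [map_add, map_sub, map_smul, map_zero,
    coord_B_zero hxy ha hb, if_true, if_false, smul_eq_mul] at q0 q1 q2 q4 q5
  have r0 : c {0, 1} = - (b * c {0, 2}) := by
    have : b * (c {0, 1} + b * c {0, 2}) = 0 := by linarith
    rcases mul_eq_zero.1 this with h | h
    · omega
    · linarith
  have r5 : c {4, 5} = - c {3, 5} := by linarith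
  have r2 : c {1, 2} = - c {0, 2} + e * (c {2, 3} + c {2, 4}) := by linarith
  have r1 : c {1, 3} = e * (c {0, 1} - b * c {1, 2}) := by
    linear_combination (-c {1, 3}) * he - e * q1
  have r4 : c {3, 4} = - (e * a * c {2, 4}) + b * c {4, 5} := by linarith
  refine ⟨(-c {0, 2}) • B x y a b 2 {0, 1, 2} + (e * (c {2, 3} + c {2, 4})) • B x y a b 2 {1, 2, 3}
    + (- (e * c {2, 4})) • B x y a b 2 {2, 3, 4} + (-c {3, 5}) • B x y a b 2 {3, 4, 5}, ?_⟩
  simp only [map_add, map_smul, t1, t2, t3, t4]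
  rw [r1, r4, r2, r0, r5]
  have he' : e ^ 2 = 1 := by rw [sq, he]
  match_scalars <;> ring_nf <;> simp only [he'] <;> ring

lemma subsingleton_pos (i : ℕ) (hi : 1 ≤ i) :
    Subsingleton (wHomology (orderComplex [x, y, y, y]) (wt x a b) i) := by
  have key : cycles (orderComplex [x, y, y, y]) (wt x a b) i ≤
      bdries (orderComplex [x, y, y, y]) (wt x a b) i := by
    intro z hz
    match i, hi with
    | 1, _ => exact cycle_one_mem_range hxy ha hb z hz
    | 2, _ =>
      rw [cycle_two_eq_zero hxy ha hb z hz]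
      exact zero_mem _
    | m + 3, _ =>
      obtain ⟨c, rfl⟩ := exists_eq_sum hxy z
      simp [simplices]
  refine (Submodule.subsingleton_iff_eq_bot).2 ?_
  rw [wHomologyS, eq_bot_iff, Submodule.map_le_iff_le_comap, Submodule.comap_bot,
    Submodule.ker_mkQ]
  exact key

/-! ### Homology in degree zero -/

/-- `H_0` is presented by generators `X`, `Y` (the classes of the letters) and the single
relation `b • X = a • Y`; Bézout coefficients split this presentation. -/
lemma homology_zero :
    Nonempty (wHomology (orderComplex [x, y, y, y]) (wt x a b) 0
      ≃ₗ[ℤ] (ℤ × ZMod (Int.gcd a b))) := by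
  obtain ⟨e, he, ⟨e1, e2, e3, e4, e5, e6, e7, e8, e9⟩, -⟩ := boundary_formulas hxy ha hb
  obtain ⟨g, hg⟩ : ∃ g : ℤ, g = (Int.gcd a b : ℤ) := ⟨_, rfl⟩
  obtain ⟨a', ha'⟩ : g ∣ a := hg ▸ Int.gcd_dvd_left ..
  obtain ⟨b', hb'⟩ : g ∣ b := hg ▸ Int.gcd_dvd_right ..
  obtain ⟨u, hu⟩ : ∃ u, u = Int.gcdA a b := ⟨_, rfl⟩
  obtain ⟨v, hv⟩ : ∃ v, v = Int.gcdB a b := ⟨_, rfl⟩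
  have hbez : a * u + b * v = g := by rw [hg, hu, hv, Int.gcd_eq_gcd_ab]
  have hg0 : g ≠ 0 := by rintro rfl; omega
  have hbez' : a' * u + b' * v = 1 := by
    apply mul_left_cancel₀ hg0
    linear_combination hbez - u * ha' - v * hb'
  have hgz : ((g : ℤ) : ZMod (Int.gcd a b)) = 0 := by
    rw [hg]; simp
  -- `X`, `Y` are the images of the classes of the letters; the matrix with these columns has
  -- determinant `1` and sends the relation `(b, -a)` to `(0, -g)`.
  obtain ⟨X, hX⟩ : ∃ X : ℤ × ZMod (Int.gcd a b), X = (a', ((-v : ℤ) : ZMod (Int.gcd a b))) :=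
    ⟨_, rfl⟩
  obtain ⟨Y, hY⟩ : ∃ Y : ℤ × ZMod (Int.gcd a b), Y = (b', ((u : ℤ) : ZMod (Int.gcd a b))) :=
    ⟨_, rfl⟩
  have hcomb : ∀ P Q : ℤ, P • X + Q • Y =
      (P * a' + Q * b', ((Q * u - P * v : ℤ) : ZMod (Int.gcd a b))) := by
    intro P Q
    rw [hX, hY]
    ext
    · simp
    · simp; ring
  have hrel : b • X = a • Y := by
    rw [← sub_eq_zero, sub_eq_add_neg, ← neg_smul, hcomb, Prod.mk_eq_zero]
    constructor
    · rw [ha', hb']; ring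
    · rw [show -a * u - b * v = -g by linarith, Int.cast_neg, hgz, neg_zero]
  obtain ⟨f, hf⟩ : ∃ f : WChain (orderComplex [x, y, y, y]) (wt x a b) 0 →ₗ[ℤ]
      ℤ × ZMod (Int.gcd a b), ∀ j, f (B x y a b 0 {j}) =
        (![X, b • X, b ^ 2 • X, Y, b • Y, b ^ 2 • Y] : Fin 6 → ℤ × ZMod (Int.gcd a b)) j :=
    ⟨∑ i, (coord x y a b 0 {i}).smulRight (![X, b • X, b ^ 2 • X, Y, b • Y, b ^ 2 • Y] i),
      fun j => by simp [coord_B_zero hxy ha hb]⟩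
  have f0 : f (B x y a b 0 {0}) = X := hf 0
  have f1 : f (B x y a b 0 {1}) = b • X := hf 1
  have f2 : f (B x y a b 0 {2}) = b ^ 2 • X := hf 2
  have f3 : f (B x y a b 0 {3}) = Y := hf 3
  have f4 : f (B x y a b 0 {4}) = b • Y := hf 4
  have f5 : f (B x y a b 0 {5}) = b ^ 2 • Y := hf 5
  have hsurj : Function.Surjective f := by
    rintro ⟨p, q⟩
    obtain ⟨q, rfl⟩ := ZMod.intCast_surjective q
    refine ⟨(u * p - b' * q) • B x y a b 0 {0} + (v * p + a' * q) • B x y a b 0 {3}, ?_⟩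
    rw [map_add, map_smul, map_smul, f0, f3, hcomb]
    refine Prod.ext ?_ (congrArg (Int.cast : ℤ → ZMod (Int.gcd a b)) ?_)
    · linear_combination p * hbez'
    · linear_combination q * hbez'
  have hker : bdries (orderComplex [x, y, y, y]) (wt x a b) 0 = LinearMap.ker f := by
    apply le_antisymm
    · rintro _ ⟨z, rfl⟩
      obtain ⟨c, rfl⟩ := exists_eq_sum hxy z
      rw [LinearMap.mem_ker, sum_simplices_one]
      simp only [map_add, map_smul, map_sub, e1, e2, e3, e4, e5, e6, e7, e8, e9, f0, f1, f2, f3,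
        f4, f5]
      linear_combination (exp := 1) (- c {1, 3} * e - c {2, 3} * e * b - c {2, 4} * e * b) • hrel
    · intro z hz
      obtain ⟨c, rfl⟩ := exists_eq_sum hxy z
      rw [LinearMap.mem_ker, sum_simplices_zero] at hz
      rw [sum_simplices_zero]
      simp only [map_add, map_smul, f0, f1, f2, f3, f4, f5] at hz
      have hz' : (c {0} + c {1} * b + c {2} * b ^ 2) • X +
          (c {3} + c {4} * b + c {5} * b ^ 2) • Y = 0 := by
        rw [← hz]; module
      rw [hcomb, Prod.mk_eq_zero, ZMod.intCast_zmod_eq_zero_iff_dvd, ← hg] at hz'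
      obtain ⟨h1, m, h2⟩ := hz'
      have hP : c {0} = - c {1} * b - c {2} * b ^ 2 - b * m := by
        linear_combination u * h1 - b' * h2 - (c {0} + c {1} * b + c {2} * b ^ 2) * hbez'
          + m * hb'
      have hQ : c {3} = - c {4} * b - c {5} * b ^ 2 + a * m := by
        linear_combination v * h1 + a' * h2 - (c {3} + c {4} * b + c {5} * b ^ 2) * hbez'
          - m * ha'
      refine ⟨(c {1} + m) • B x y a b 1 {0, 1} + c {2} • B x y a b 1 {0, 2} +
        (e * m) • B x y a b 1 {1, 3} + c {4} • B x y a b 1 {3, 4} + c {5} • B x y a b 1 {3, 5}, ?_⟩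
      simp only [map_add, map_smul, e1, e2, e4, e7, e8]
      rw [hP, hQ]
      have he' : e ^ 2 = 1 := by rw [sq, he]
      match_scalars <;> ring_nf <;> simp only [he'] <;> ring
  have htop : wHomologyS (orderComplex [x, y, y, y]) (wt x a b) 0 = ⊤ := by
    rw [wHomologyS, cycles, Submodule.map_top, Submodule.range_mkQ]
  exact ⟨(LinearEquiv.ofTop _ htop).trans ((Submodule.quotEquivOfEq _ _ hker).trans
    (f.quotKerEquivOfSurjective hsurj))⟩

end

end XYYY

open FinSC in
/-- Proposition on the sequence `xyyy`.  Let `x ≠ y` be letters of an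
alphabet and `S = xyyy`.  Let `K = Δ(P_S)` be the order complex of the poset of proper
substrings of `S`, with the Type 3 weighting over `ℤ`: the weight of a substring is the
product of the weights of its letters (`w x = a > 0`, `w y = b > 0`), and the weight of a
simplex is the LCM of the weights of its vertices.  Then
`H_0(K,w) ≅ ℤ ⊕ ℤ/gcd(a,b)` and `H_i(K,w) ≅ 0` for `i ≥ 1`. -/
theorem wHomology_orderComplex_xyyy
    {A : Type*} [LinearOrder A] (x y : A) (hxy : x ≠ y)
    (a b : ℤ) (ha : 0 < a) (hb : 0 < b) :
    Nonempty (wHomology (orderComplex [x, y, y, y])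
        (fun σ => σ.lcm (fun T => (T.map (fun c => if c = x then a else b)).prod)) 0
      ≃ₗ[ℤ] (ℤ × ZMod (Int.gcd a b))) ∧
    ∀ i : ℕ, 1 ≤ i → Subsingleton (wHomology (orderComplex [x, y, y, y])
        (fun σ => σ.lcm (fun T => (T.map (fun c => if c = x then a else b)).prod)) i) := by
  exact ⟨XYYY.homology_zero hxy ha hb, XYYY.subsingleton_pos hxy ha hb⟩
end
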